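/- arXiv:2005.08237 — 11 statements merged into one kernel-verified Lean document; each statement's English description precedes it below -/
import Mathlib

section
/- Liouville's theorem for harmonic functions with polynomial growth: let n ≥ 1 and let h : ℝⁿ → ℝ be a smooth function with Δh = 0 on all of ℝⁿ (where Δh = Σᵢ ∂²h/∂xᵢ²). Suppose there is a real polynomial P in n variables of total degree k such that |h(x)| ≤ |P(x)| for all x ∈ ℝⁿ. Then h is itself (the evaluation of) a polynomial in n variables of total degree at most k. -/
open MeasureTheory

/-- Directional derivative. -/
noncomputable def dirD {E : Type*} [NormedAddCommGroup E] [NormedSpace ℝ E] (v : E) (f : E → ℝ) :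
    E → ℝ := fun x => fderiv ℝ f x v

section general
variable {E : Type*} [NormedAddCommGroup E] [NormedSpace ℝ E]

lemma dirD_smooth {f : E → ℝ} (hf : ContDiff ℝ (⊤ : ℕ∞) f) (v : E) :
    ContDiff ℝ (⊤ : ℕ∞) (dirD v f) := by
  have : ContDiff ℝ (⊤ : ℕ∞) (fderiv ℝ f) := hf.fderiv_right (by simp)
  exact this.clm_apply contDiff_const

lemma dirD_dirD {f : E → ℝ} (hf : ContDiff ℝ (⊤ : ℕ∞) f) (v w x : E) :
    dirD v (dirD w f) x = fderiv ℝ (fderiv ℝ f) x v w := by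
  have h1 : ContDiff ℝ (⊤ : ℕ∞) (fderiv ℝ f) := hf.fderiv_right (by simp)
  have h2 : DifferentiableAt ℝ (fderiv ℝ f) x := (h1.differentiable (by simp)) x
  unfold dirD
  rw [fderiv_clm_apply h2 (by fun_prop)]
  simp

lemma dirD_comm {f : E → ℝ} (hf : ContDiff ℝ (⊤ : ℕ∞) f) (v w : E) :
    dirD v (dirD w f) = dirD w (dirD v f) := by
  funext x
  rw [dirD_dirD hf, dirD_dirD hf]
  exact (hf.contDiffAt.isSymmSndFDerivAt (by
    rw [minSmoothness_of_isRCLikeNormedField]; exact WithTop.coe_le_coe.2 le_top)).eq v w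

lemma dirD_affine {f : E → ℝ} (hf : ContDiff ℝ (⊤ : ℕ∞) f) (v x : E) (t : ℝ) (y : E) :
    fderiv ℝ (fun y => f (x + t • y)) y v = t * dirD v f (x + t • y) := by
  have h1 : HasFDerivAt f (fderiv ℝ f (x + t • y)) (x + t • y) :=
    ((hf.differentiable (by simp)) _).hasFDerivAt
  have h2 : HasFDerivAt (fun y : E => x + t • y) (t • ContinuousLinearMap.id ℝ E) y :=
    ((hasFDerivAt_id y).const_smul t).const_add x
  have h3 := (h1.comp y h2).fderiv
  have h4 : (f ∘ fun y => x + t • y) = fun y => f (x + t • y) := rfl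
  rw [h4] at h3
  rw [h3]
  simp [dirD]

end general

/-- Harmonic functions. -/
def IsHarm {n : ℕ} (h : EuclideanSpace ℝ (Fin n) → ℝ) : Prop :=
  ∀ x, ∑ i : Fin n, dirD (EuclideanSpace.single i (1 : ℝ))
    (dirD (EuclideanSpace.single i (1 : ℝ)) h) x = 0

lemma IsHarm.dirD {n : ℕ} {h : EuclideanSpace ℝ (Fin n) → ℝ} (hs : ContDiff ℝ (⊤ : ℕ∞) h)
    (hh : IsHarm h) (v : EuclideanSpace ℝ (Fin n)) : IsHarm (dirD v h) := by
  intro x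
  have h1 : ∀ i : Fin n, _root_.dirD (EuclideanSpace.single i (1 : ℝ))
      (_root_.dirD (EuclideanSpace.single i (1 : ℝ)) (_root_.dirD v h)) =
      _root_.dirD v (_root_.dirD (EuclideanSpace.single i (1 : ℝ))
      (_root_.dirD (EuclideanSpace.single i (1 : ℝ)) h)) := by
    intro i
    rw [dirD_comm hs, dirD_comm (dirD_smooth hs _)]
  simp_rw [h1]
  have h2 : (fun x => ∑ i : Fin n, _root_.dirD (EuclideanSpace.single i (1 : ℝ))
    (_root_.dirD (EuclideanSpace.single i (1 : ℝ)) h) x) = fun _ => 0 := funext hh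
  have h3 := congrArg (fun f => fderiv ℝ f x v) h2
  rw [fderiv_fun_sum (fun i _ => ((dirD_smooth (dirD_smooth hs _) _).differentiable (by simp)) x)] at h3
  simpa [_root_.dirD] using h3

lemma exists_mollifier (n : ℕ) (hn : 1 ≤ n) : ∃ Ψ φ : EuclideanSpace ℝ (Fin n) → ℝ,
    ContDiff ℝ (⊤ : ℕ∞) Ψ ∧ ContDiff ℝ (⊤ : ℕ∞) φ ∧ (∀ y, 2 < ‖y‖ → Ψ y = 0) ∧
    (∀ y, 2 < ‖y‖ → φ y = 0) ∧
    (∀ i y, fderiv ℝ Ψ y (EuclideanSpace.single i (1 : ℝ)) = y i * φ y) ∧ ∫ y, φ y ≠ 0 := by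
  set F : ℝ → ℝ := fun s => Real.smoothTransition (2 - s) with hF
  have hFs : ContDiff ℝ (⊤ : ℕ∞) F := Real.smoothTransition.contDiff.comp (by fun_prop)
  have hFd := (contDiff_infty_iff_deriv.1 hFs)
  have hanti : Antitone F := fun a b hab => Real.smoothTransition.monotone (by linarith)
  have hF0 : ∀ s, 2 ≤ s → F s = 0 := fun s hs =>
    Real.smoothTransition.zero_of_nonpos (by linarith)
  have hdF0 : ∀ s, 2 < s → deriv F s = 0 := by
    intro s hs
    have : F =ᶠ[nhds s] fun _ => 0 := by
      filter_upwards [lt_mem_nhds hs] with a ha using hF0 a ha.le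
    rw [this.deriv_eq]; simp
  have hsq : ∀ y : EuclideanSpace ℝ (Fin n), 2 < ‖y‖ → 2 < ‖y‖ ^ 2 := fun y hy => by nlinarith
  have hφs : ContDiff ℝ (⊤ : ℕ∞)
      (fun y : EuclideanSpace ℝ (Fin n) => 2 * deriv F (‖y‖ ^ 2)) :=
    contDiff_const.mul (hFd.2.comp (contDiff_norm_sq ℝ))
  refine ⟨fun y => F (‖y‖ ^ 2), fun y => 2 * deriv F (‖y‖ ^ 2),
    hFs.comp (contDiff_norm_sq ℝ), hφs,
    fun y hy => hF0 _ (hsq y hy).le, fun y hy => by simp [hdF0 _ (hsq y hy)], ?_, ?_⟩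
  · intro i y
    have h1 := (hFd.1 (‖y‖ ^ 2)).hasDerivAt.comp_hasFDerivAt y
      (hasStrictFDerivAt_norm_sq y).hasFDerivAt
    have h2 : fderiv ℝ (fun y : EuclideanSpace ℝ (Fin n) => F (‖y‖ ^ 2)) y = _ := h1.fderiv
    rw [h2]
    simp [EuclideanSpace.inner_single_right]
    ring
  · obtain ⟨s, hs, hds⟩ := exists_deriv_eq_slope F (a := 1) (b := 2) (by norm_num)
      hFs.continuous.continuousOn hFd.1.differentiableOn
    have hF1 : F 1 = 1 := Real.smoothTransition.one_of_one_le (by norm_num)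
    rw [hF0 2 le_rfl, hF1] at hds
    have hpos := Continuous.integral_pos_of_hasCompactSupport_nonneg_nonzero
      (μ := (volume : Measure (EuclideanSpace ℝ (Fin n))))
      (f := fun y => -(2 * deriv F (‖y‖ ^ 2)))
      (x := EuclideanSpace.single ⟨0, hn⟩ (Real.sqrt s)) hφs.continuous.neg
      (HasCompactSupport.intro (isCompact_closedBall 0 2) (by
        intro y hy
        rw [hdF0 _ (hsq y (by simpa using hy))]; simp))
      (by
        intro y
        have : deriv F (‖y‖ ^ 2) ≤ 0 := hanti.deriv_nonpos
        simp only [Pi.zero_apply]; linarith)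
      (by
        have : ‖(EuclideanSpace.single ⟨0, hn⟩ (Real.sqrt s) : EuclideanSpace ℝ (Fin n))‖ ^ 2
          = s := by
          rw [PiLp.norm_single, Real.norm_eq_abs, sq_abs, Real.sq_sqrt (by linarith [hs.1])]
        rw [this, hds]; norm_num)
    rw [integral_neg] at hpos
    intro h0
    rw [h0] at hpos
    simp at hpos

lemma sum_coord {n : ℕ} (L : EuclideanSpace ℝ (Fin n) →L[ℝ] ℝ) (y : EuclideanSpace ℝ (Fin n)) :
    L y = ∑ i, y i * L (EuclideanSpace.single i (1 : ℝ)) := by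
  conv_lhs => rw [← (EuclideanSpace.basisFun (Fin n) ℝ).sum_repr y]
  simp

lemma hcs_of {n : ℕ} {φ : EuclideanSpace ℝ (Fin n) → ℝ} (hφ : ∀ y, 2 < ‖y‖ → φ y = 0) :
    HasCompactSupport φ :=
  HasCompactSupport.intro (isCompact_closedBall 0 2) (fun y hy => hφ y (by simpa using hy))

lemma ibp {n : ℕ} {f g : EuclideanSpace ℝ (Fin n) → ℝ} (hf : ContDiff ℝ (⊤ : ℕ∞) f)
    (hg : ContDiff ℝ (⊤ : ℕ∞) g) (hc : HasCompactSupport g) (v : EuclideanSpace ℝ (Fin n)) :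
    ∫ x, f x * fderiv ℝ g x v = - ∫ x, fderiv ℝ f x v * g x := by
  have hf' := (dirD_smooth hf v).continuous
  have hg' := (dirD_smooth hg v).continuous
  refine integral_mul_fderiv_eq_neg_fderiv_mul_of_integrable ?_ ?_ ?_
    (fun x _ => hf.differentiable (by simp) x) (fun x _ => hg.differentiable (by simp) x)
  · exact (hf'.mul hg.continuous).integrable_of_hasCompactSupport hc.mul_left
  · exact (hf.continuous.mul hg').integrable_of_hasCompactSupport (hc.fderiv_apply ℝ v).mul_left
  · exact (hf.continuous.mul hg.continuous).integrable_of_hasCompactSupport hc.mul_left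

lemma affine_smooth {n : ℕ} {h : EuclideanSpace ℝ (Fin n) → ℝ} (hs : ContDiff ℝ (⊤ : ℕ∞) h)
    (x : EuclideanSpace ℝ (Fin n)) (t : ℝ) : ContDiff ℝ (⊤ : ℕ∞) (fun y => h (x + t • y)) :=
  hs.comp (by fun_prop)

lemma mean_value {n : ℕ} {Ψ φ h : EuclideanSpace ℝ (Fin n) → ℝ}
    (hΨs : ContDiff ℝ (⊤ : ℕ∞) Ψ) (hφs : ContDiff ℝ (⊤ : ℕ∞) φ) (hΨ0 : ∀ y, 2 < ‖y‖ → Ψ y = 0)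
    (hφ0 : ∀ y, 2 < ‖y‖ → φ y = 0)
    (hΨφ : ∀ i y, fderiv ℝ Ψ y (EuclideanSpace.single i (1 : ℝ)) = y i * φ y)
    (hs : ContDiff ℝ (⊤ : ℕ∞) h) (hh : IsHarm h) (x : EuclideanSpace ℝ (Fin n)) (t : ℝ) :
    ∫ y, h (x + t • y) * φ y = h x * ∫ y, φ y := by
  have hcφ := hcs_of hφ0
  have hcΨ := hcs_of hΨ0
  have hdc : Continuous (fderiv ℝ h) := (hs.fderiv_right (m := (⊤ : ℕ∞)) (by simp)).continuous
  -- the derivative vanishes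
  have hzero : ∀ t : ℝ, ∫ y, fderiv ℝ h (x + t • y) y * φ y = 0 := by
    intro t
    have e1 : ∀ y, fderiv ℝ h (x + t • y) y * φ y =
        ∑ i, dirD (EuclideanSpace.single i (1 : ℝ)) h (x + t • y) *
          fderiv ℝ Ψ y (EuclideanSpace.single i (1 : ℝ)) := by
      intro y
      rw [sum_coord (fderiv ℝ h (x + t • y)) y, Finset.sum_mul]
      refine Finset.sum_congr rfl fun i _ => ?_
      rw [hΨφ]; simp only [dirD]; ring
    simp_rw [e1]
    rw [integral_finsetSum]
    · have e2 : ∀ i : Fin n, ∫ y, dirD (EuclideanSpace.single i (1 : ℝ)) h (x + t • y) *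
          fderiv ℝ Ψ y (EuclideanSpace.single i (1 : ℝ)) =
          - ∫ y, t * dirD (EuclideanSpace.single i (1 : ℝ))
            (dirD (EuclideanSpace.single i (1 : ℝ)) h) (x + t • y) * Ψ y := by
        intro i
        rw [ibp (affine_smooth (dirD_smooth hs _) x t) hΨs hcΨ]
        simp_rw [dirD_affine (dirD_smooth hs _)]
      simp_rw [e2]
      rw [Finset.sum_neg_distrib, ← integral_finsetSum]
      · have e3 : ∀ y, ∑ i : Fin n, t * dirD (EuclideanSpace.single i (1 : ℝ))
            (dirD (EuclideanSpace.single i (1 : ℝ)) h) (x + t • y) * Ψ y = 0 := by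
          intro y
          rw [← Finset.sum_mul, ← Finset.mul_sum, hh]; simp
        simp [e3]
      · intro i _
        have := (affine_smooth (dirD_smooth (dirD_smooth hs (EuclideanSpace.single i (1 : ℝ)))
          (EuclideanSpace.single i (1 : ℝ))) x t).continuous
        exact ((continuous_const.mul this).mul
          hΨs.continuous).integrable_of_hasCompactSupport hcΨ.mul_left
    · intro i _
      have := (affine_smooth (dirD_smooth hs (EuclideanSpace.single i (1 : ℝ))) x t).continuous
      have h2 := (dirD_smooth hΨs (EuclideanSpace.single i (1 : ℝ))).continuous
      exact (this.mul h2).integrable_of_hasCompactSupport (hcΨ.fderiv_apply ℝ _).mul_left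
  have hder : ∀ t : ℝ, HasDerivAt (fun t => ∫ y, h (x + t • y) * φ y) 0 t := by
    intro t
    have hcont : Continuous (fun p : ℝ × EuclideanSpace ℝ (Fin n) =>
        fderiv ℝ h (x + p.1 • p.2) p.2) :=
      (hdc.comp (by fun_prop)).clm_apply continuous_snd
    obtain ⟨C, hC⟩ := ((isCompact_Icc (a := t - 1) (b := t + 1)).prod
      (isCompact_closedBall (0 : EuclideanSpace ℝ (Fin n)) 2)).exists_bound_of_continuousOn
      hcont.continuousOn
    have key := hasDerivAt_integral_of_dominated_loc_of_deriv_le (μ := volume)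
      (F := fun t y => h (x + t • y) * φ y) (x₀ := t) (s := Set.Icc (t - 1) (t + 1))
      (bound := fun y => C * |φ y|)
      (F' := fun t y => fderiv ℝ h (x + t • y) y * φ y)
      (Icc_mem_nhds (by linarith) (by linarith))
      (Filter.Eventually.of_forall fun s =>
        ((affine_smooth hs x s).continuous.mul hφs.continuous).aestronglyMeasurable)
      (((affine_smooth hs x t).continuous.mul
        hφs.continuous).integrable_of_hasCompactSupport hcφ.mul_left)
      (((hcont.comp (by fun_prop : Continuous fun y : EuclideanSpace ℝ (Fin n) =>
        (t, y))).mul hφs.continuous).aestronglyMeasurable)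
      (Filter.Eventually.of_forall fun y s hs' => by
        by_cases hy : ‖y‖ ≤ 2
        · rw [norm_mul]
          exact mul_le_mul_of_nonneg_right (hC (s, y) ⟨hs', by simpa using hy⟩) (norm_nonneg _)
        · rw [hφ0 y (not_le.1 hy)]; simp)
      ((continuous_const.mul hφs.continuous.abs).integrable_of_hasCompactSupport
        (hcs_of fun y hy => by simp [hφ0 y hy]))
      (Filter.Eventually.of_forall fun y s _ => by
        have h1 : HasFDerivAt h (fderiv ℝ h (x + s • y)) (x + s • y) :=
          ((hs.differentiable (by simp)) _).hasFDerivAt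
        have h2 : HasDerivAt (fun s : ℝ => x + s • y) y s := by
          simpa using ((hasDerivAt_id s).smul_const y).const_add x
        exact (h1.comp_hasDerivAt s h2).mul_const _)
    have := key.2
    rwa [hzero t] at this
  have hconst := is_const_of_deriv_eq_zero (fun t => (hder t).differentiableAt)
    (fun t => (hder t).deriv) t 0
  rw [hconst]
  simp [integral_const_mul]

lemma grad_bound (n : ℕ) (hn : 1 ≤ n) (v : EuclideanSpace ℝ (Fin n)) :
    ∃ C : ℝ, 0 ≤ C ∧ ∀ h : EuclideanSpace ℝ (Fin n) → ℝ, ContDiff ℝ (⊤ : ℕ∞) h → IsHarm h →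
      ∀ (x : EuclideanSpace ℝ (Fin n)) (t M : ℝ), 0 < t →
        (∀ y, ‖y‖ ≤ 2 → |h (x + t • y)| ≤ M) → t * |dirD v h x| ≤ C * M := by
  obtain ⟨Ψ, φ, hΨs, hφs, hΨ0, hφ0, hΨφ, hc⟩ := exists_mollifier n hn
  have hcφ := hcs_of hφ0
  have hdφ := (dirD_smooth hφs v).continuous
  have hcd : HasCompactSupport (dirD v φ) := hcφ.fderiv_apply ℝ v
  have hd0 : ∀ y, 2 < ‖y‖ → dirD v φ y = 0 := by
    intro y hy
    have : φ =ᶠ[nhds y] fun _ => 0 := by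
      filter_upwards [(isOpen_lt continuous_const continuous_norm).mem_nhds hy] with z hz
        using hφ0 z hz
    simp [dirD, this.fderiv_eq]
  have hint : Integrable (fun y => |dirD v φ y|) := (hdφ.integrable_of_hasCompactSupport hcd).abs
  refine ⟨(∫ y, |dirD v φ y|) / |∫ y, φ y|, by positivity, ?_⟩
  intro h hs hh x t M ht hM
  have h1 := mean_value hΨs hφs hΨ0 hφ0 hΨφ (dirD_smooth hs v) (hh.dirD hs v) x t
  have h2 := ibp (affine_smooth hs x t) hφs hcφ v
  simp_rw [dirD_affine hs, mul_assoc, integral_const_mul] at h2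
  rw [h1] at h2
  have h3 : |∫ y, h (x + t • y) * fderiv ℝ φ y v| ≤ ∫ y, M * |dirD v φ y| := by
    rw [← Real.norm_eq_abs]
    refine norm_integral_le_of_norm_le (hint.const_mul M)
      (Filter.Eventually.of_forall fun y => ?_)
    by_cases hy : ‖y‖ ≤ 2
    · rw [norm_mul]
      exact mul_le_mul_of_nonneg_right (hM y hy) (abs_nonneg _)
    · have := hd0 y (not_le.1 hy)
      have h4 : fderiv ℝ φ y v = 0 := this
      rw [h4, this]; simp
  rw [h2, abs_neg, abs_mul, abs_mul, abs_of_pos ht, integral_const_mul] at h3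
  rw [div_mul_eq_mul_div, le_div_iff₀ (abs_pos.2 hc)]
  linarith

lemma poly_bound {n : ℕ} (P : MvPolynomial (Fin n) ℝ) : ∃ A : ℝ, 0 ≤ A ∧
    ∀ x : EuclideanSpace ℝ (Fin n),
      |MvPolynomial.eval (fun i => x i) P| ≤ A * (1 + ‖x‖) ^ P.totalDegree := by
  refine ⟨∑ d ∈ P.support, |P.coeff d|, by positivity, fun x => ?_⟩
  rw [MvPolynomial.eval_eq', Finset.sum_mul]
  refine (Finset.abs_sum_le_sum_abs _ _).trans (Finset.sum_le_sum fun d hd => ?_)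
  rw [abs_mul]
  refine mul_le_mul_of_nonneg_left ?_ (abs_nonneg _)
  have h1 : ∑ i, d i ≤ P.totalDegree := by
    have := MvPolynomial.le_totalDegree hd
    rwa [Finsupp.sum_fintype _ _ (by simp)] at this
  calc |∏ i, x i ^ d i| = ∏ i, |x i| ^ d i := by rw [Finset.abs_prod]; simp
    _ ≤ ∏ i, (1 + ‖x‖) ^ d i := by
        refine Finset.prod_le_prod (fun i _ => by positivity) fun i _ => ?_
        refine pow_le_pow_left₀ (abs_nonneg _) ?_ _
        have := PiLp.norm_apply_le x i
        rw [Real.norm_eq_abs] at this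
        linarith
    _ = (1 + ‖x‖) ^ ∑ i, d i := Finset.prod_pow_eq_pow_sum _ _ _
    _ ≤ _ := pow_le_pow_right₀ (by linarith [norm_nonneg x]) h1

lemma poly_prim {n : ℕ} (p : MvPolynomial (Fin n) ℝ) : ∃ q : MvPolynomial (Fin n) ℝ,
    q.totalDegree ≤ p.totalDegree ∧ ∀ x : Fin n → ℝ,
      ∫ s in (0 : ℝ)..1, MvPolynomial.eval (fun i => s * x i) p = MvPolynomial.eval x q := by
  refine ⟨∑ d ∈ p.support, MvPolynomial.monomial d (p.coeff d / ((∑ i, d i : ℕ) + 1)), ?_, ?_⟩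
  · refine MvPolynomial.totalDegree_finsetSum_le fun d hd => ?_
    exact (MvPolynomial.totalDegree_monomial_le _ _).trans (MvPolynomial.le_totalDegree hd)
  · intro x
    simp_rw [MvPolynomial.eval_eq' _ p]
    rw [intervalIntegral.integral_finsetSum
      (fun d _ => Continuous.intervalIntegrable (by fun_prop) _ _), map_sum]
    refine Finset.sum_congr rfl fun d _ => ?_
    simp_rw [mul_pow, Finset.prod_mul_distrib, Finset.prod_pow_eq_pow_sum]
    rw [intervalIntegral.integral_const_mul, intervalIntegral.integral_mul_const, integral_pow,
      MvPolynomial.eval_monomial, Finsupp.prod_fintype _ _ (by simp)]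
    simp
    ring

lemma liouville_aux (n : ℕ) (hn : 1 ≤ n) (k : ℕ) : ∀ h : EuclideanSpace ℝ (Fin n) → ℝ,
    ContDiff ℝ (⊤ : ℕ∞) h → IsHarm h → (∃ A : ℝ, 0 ≤ A ∧ ∀ x, |h x| ≤ A * (1 + ‖x‖) ^ k) →
    ∃ Q : MvPolynomial (Fin n) ℝ, Q.totalDegree ≤ k ∧
      ∀ x : EuclideanSpace ℝ (Fin n), h x = MvPolynomial.eval (fun i => x i) Q := by
  induction k with
  | zero =>
    rintro h hs hh ⟨A, hA, hb⟩
    have hz : ∀ x, fderiv ℝ h x = 0 := by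
      intro x
      ext v
      obtain ⟨C, hC, hCb⟩ := grad_bound n hn v
      have h1 : ∀ t : ℝ, 0 < t → t * |dirD v h x| ≤ C * A := fun t ht =>
        hCb h hs hh x t A ht (fun y _ => by simpa using hb (x + t • y))
      by_contra hne
      have hpos : 0 < |dirD v h x| := abs_pos.2 hne
      have h2 := h1 ((C * A + 1) / |dirD v h x|) (by positivity)
      rw [div_mul_cancel₀ _ hpos.ne'] at h2
      linarith
    refine ⟨MvPolynomial.C (h 0), by simp, fun x => ?_⟩
    rw [MvPolynomial.eval_C]
    exact is_const_of_fderiv_eq_zero (hs.differentiable (by simp)) hz x 0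
  | succ k ih =>
    rintro h hs hh ⟨A, hA, hb⟩
    have hd : ∀ i : Fin n, ∃ Q : MvPolynomial (Fin n) ℝ, Q.totalDegree ≤ k ∧
        ∀ x : EuclideanSpace ℝ (Fin n), dirD (EuclideanSpace.single i (1 : ℝ)) h x =
          MvPolynomial.eval (fun i => x i) Q := by
      intro i
      obtain ⟨C, hC, hCb⟩ := grad_bound n hn (EuclideanSpace.single i (1 : ℝ))
      refine ih _ (dirD_smooth hs _) (hh.dirD hs _) ⟨C * (A * 3 ^ (k + 1)), by positivity, ?_⟩
      intro x
      have ht : 0 < 1 + ‖x‖ := by positivity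
      have h1 := hCb h hs hh x (1 + ‖x‖) (A * (3 * (1 + ‖x‖)) ^ (k + 1)) ht (by
        intro y hy
        refine (hb _).trans ?_
        gcongr
        have h2 := norm_add_le x ((1 + ‖x‖) • y)
        rw [norm_smul, Real.norm_eq_abs, abs_of_pos ht] at h2
        nlinarith)
      refine le_of_mul_le_mul_left (h1.trans (le_of_eq ?_)) ht
      rw [mul_pow, pow_succ (1 + ‖x‖)]
      ring
    choose p hp hpe using hd
    choose q hq hqe using fun i => poly_prim (p i)
    refine ⟨MvPolynomial.C (h 0) + ∑ i, MvPolynomial.X i * q i, ?_, fun x => ?_⟩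
    · refine (MvPolynomial.totalDegree_add _ _).trans (max_le (by simp) ?_)
      refine MvPolynomial.totalDegree_finsetSum_le fun i _ => ?_
      refine (MvPolynomial.totalDegree_mul _ _).trans ?_
      rw [MvPolynomial.totalDegree_X]
      have := (hq i).trans (hp i)
      omega
    · have hder : ∀ s : ℝ, HasDerivAt (fun s : ℝ => h (s • x))
          (∑ i, x i * MvPolynomial.eval (fun j => s * x j) (p i)) s := by
        intro s
        have h1 : HasFDerivAt h (fderiv ℝ h (s • x)) (s • x) :=
          ((hs.differentiable (by simp)) _).hasFDerivAt
        have h2 : HasDerivAt (fun s : ℝ => s • x) x s := by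
          simpa using ((hasDerivAt_id s).smul_const x)
        have h3 := h1.comp_hasDerivAt s h2
        rw [sum_coord] at h3
        refine h3.congr_deriv ?_
        refine Finset.sum_congr rfl fun i _ => ?_
        have := hpe i (s • x)
        simp only [dirD] at this
        rw [this]
        simp
      have hcp : ∀ i : Fin n, Continuous fun s : ℝ =>
          MvPolynomial.eval (fun j => s * x j) (p i) := fun i =>
        (MvPolynomial.continuous_eval (p i)).comp (by fun_prop)
      have hcp2 : ∀ i : Fin n, Continuous fun s : ℝ =>
          x i * MvPolynomial.eval (fun j => s * x j) (p i) := fun i =>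
        continuous_const.mul (hcp i)
      have h4 := intervalIntegral.integral_eq_sub_of_hasDerivAt (a := 0) (b := 1)
        (fun s _ => hder s) (Continuous.intervalIntegrable
          (continuous_finsetSum Finset.univ fun i _ => hcp2 i) _ _)
      rw [intervalIntegral.integral_finsetSum (fun i _ =>
        (hcp2 i).intervalIntegrable _ _)] at h4
      simp_rw [intervalIntegral.integral_const_mul, hqe] at h4
      simp at h4 ⊢
      linarith


/-- Liouville's theorem for harmonic functions with polynomial growth: if `h` is a smooth
harmonic function on `ℝⁿ` (`n ≥ 1`) satisfying `|h(x)| ≤ |P(x)|` for some real polynomial `P`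
in `n` variables of total degree `k`, then `h` is the evaluation of a polynomial in `n`
variables of total degree at most `k`. -/
theorem liouville_harmonic (n : ℕ) (hn : 1 ≤ n) (h : EuclideanSpace ℝ (Fin n) → ℝ)
    (hsmooth : ContDiff ℝ (⊤ : ℕ∞) h)
    (hharm : ∀ x : EuclideanSpace ℝ (Fin n),
      ∑ i : Fin n, iteratedFDeriv ℝ 2 h x ![EuclideanSpace.single i (1 : ℝ),
        EuclideanSpace.single i (1 : ℝ)] = 0)
    (P : MvPolynomial (Fin n) ℝ) (k : ℕ) (hP : P.totalDegree = k)
    (hbound : ∀ x : EuclideanSpace ℝ (Fin n),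
      |h x| ≤ |MvPolynomial.eval (fun i => x i) P|) :
    ∃ Q : MvPolynomial (Fin n) ℝ, Q.totalDegree ≤ k ∧
      ∀ x : EuclideanSpace ℝ (Fin n), h x = MvPolynomial.eval (fun i => x i) Q := by
  refine liouville_aux n hn k h hsmooth ?_ ?_
  · intro x
    rw [← hharm x]
    refine Finset.sum_congr rfl fun i _ => ?_
    rw [dirD_dirD hsmooth, iteratedFDeriv_two_apply]
    rfl
  · obtain ⟨A, hA, hb⟩ := poly_bound P
    exact ⟨A, hA, fun x => (hbound x).trans (hP ▸ hb x)⟩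
end

section
/- The set (0, 1/4] ∪ {1/3, 1} is a fundamental set for the Gamma function: if f : (0,∞) → ℝ satisfies the gamma functional identities and f(x) = Γ(x) for every x ∈ (0, 1/4] ∪ {1/3, 1}, then f(x) = Γ(x) for every x > 0. -/
/-- The set `(0, 1/4] ∪ {1/3, 1}` is a fundamental set for the Gamma function: if
`f : (0,∞) → ℝ` satisfies the gamma functional identities (recurrence, duplication,
reflection) and agrees with `Γ` on `(0, 1/4] ∪ {1/3, 1}`, then `f = Γ` on `(0, ∞)`. -/
theorem fundamental_set_quarter (f : ℝ → ℝ)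
    (hrec : ∀ x : ℝ, 0 < x → f (x + 1) = x * f x)
    (hdup : ∀ x : ℝ, 0 < x →
      Real.sqrt Real.pi * f x = (2 : ℝ) ^ (x - 1) * f (x / 2) * f (x / 2 + 1 / 2))
    (hrefl : ∀ x : ℝ, 0 < x → x < 1 → f x * f (1 - x) = Real.pi / Real.sin (Real.pi * x))
    (hagree : ∀ x ∈ Set.Ioc (0 : ℝ) (1 / 4) ∪ ({1 / 3, 1} : Set ℝ), f x = Real.Gamma x) :
    ∀ x : ℝ, 0 < x → f x = Real.Gamma x := by
  set g : ℝ → ℝ := fun x => f x / Real.Gamma x with hg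
  have hG : ∀ x : ℝ, 0 < x → Real.Gamma x ≠ 0 := fun x hx => (Real.Gamma_pos_of_pos hx).ne'
  have hfg : ∀ x : ℝ, 0 < x → f x = g x * Real.Gamma x := fun x hx => by
    simp only [hg]; rw [div_mul_cancel₀ _ (hG x hx)]
  have grec : ∀ x : ℝ, 0 < x → g (x + 1) = g x := by
    intro x hx
    simp only [hg]
    rw [hrec x hx, Real.Gamma_add_one hx.ne', mul_div_mul_left _ _ hx.ne']
  have grefl : ∀ x : ℝ, 0 < x → x < 1 → g x * g (1 - x) = 1 := by
    intro x hx hx1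
    have h := hrefl x hx hx1
    rw [← Real.Gamma_mul_Gamma_one_sub] at h
    simp only [hg]
    rw [div_mul_div_comm, h, div_self (mul_ne_zero (hG x hx) (hG _ (by linarith)))]
  have gdup : ∀ x : ℝ, 0 < x → g x = g (x / 2) * g (x / 2 + 1 / 2) := by
    intro x hx
    have h := hdup x hx
    have h2 := Real.Gamma_mul_Gamma_add_half (x / 2)
    rw [show 2 * (x / 2) = x by ring] at h2
    rw [hfg x hx, hfg (x / 2) (by linarith), hfg (x / 2 + 1 / 2) (by linarith)] at h
    have hpow : (2 : ℝ) ^ (x - 1) * (2 : ℝ) ^ (1 - x) = 1 := by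
      rw [← Real.rpow_add (by norm_num)]; simp
    have hs : Real.sqrt Real.pi ≠ 0 := (Real.sqrt_pos.mpr Real.pi_pos).ne'
    apply mul_right_cancel₀ (mul_ne_zero hs (hG x hx))
    linear_combination h + (2 : ℝ) ^ (x - 1) * g (x / 2) * g (x / 2 + 1 / 2) * h2
      + g (x / 2) * g (x / 2 + 1 / 2) * Real.Gamma x * Real.sqrt Real.pi * hpow
  have gag : ∀ x ∈ Set.Ioc (0 : ℝ) (1 / 4) ∪ ({1 / 3, 1} : Set ℝ), g x = 1 := by
    intro x hx
    have hx0 : 0 < x := by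
      rcases hx with h | h | h
      · exact h.1
      · rw [h]; norm_num
      · rw [h]; norm_num
    simp only [hg]
    rw [hagree x hx, div_self (hG x hx0)]
  have gq : ∀ x : ℝ, 0 < x → x ≤ 1 / 4 → g x = 1 := fun x h1 h2 => gag x (Or.inl ⟨h1, h2⟩)
  have g1 : g 1 = 1 := gag 1 (by simp)
  have g3 : g (1 / 3) = 1 := gag (1 / 3) (by simp)
  have ghalf : g (1 / 2) = 1 := by
    have h := gdup 1 one_pos
    rw [show (1 / 2 + 1 / 2 : ℝ) = 1 by norm_num, g1] at h
    linarith
  have gT : ∀ x : ℝ, 1 / 4 < x → x < 1 / 2 → g (1 - 2 * x) = 1 → g x = 1 := by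
    intro x h1 h2 h
    have hd := gdup (1 - 2 * x) (by linarith)
    rw [h, gq ((1 - 2 * x) / 2) (by linarith) (by linarith),
      show (1 - 2 * x) / 2 + 1 / 2 = 1 - x by ring] at hd
    have hr := grefl x (by linarith) (by linarith)
    rw [← one_mul (g (1 - x)), ← hd] at hr
    linarith
  have key : ∀ n : ℕ, ∀ x : ℝ, 0 < x → x < 1 / 2 → 1 / 12 ≤ 2 ^ n * |x - 1 / 3| → g x = 1 := by
    intro n
    induction n with
    | zero =>
      intro x h1 h2 h
      rw [pow_zero, one_mul] at h
      rcases le_or_gt x (1 / 4) with hx | hx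
      · exact gq x h1 hx
      · rcases le_abs.mp h with h | h
        · exact gT x hx h2 (gq _ (by linarith) (by linarith))
        · linarith
    | succ n ih =>
      intro x h1 h2 h
      rcases le_or_gt x (1 / 4) with hx | hx
      · exact gq x h1 hx
      · refine gT x hx h2 (ih _ (by linarith) (by linarith) ?_)
        have : |1 - 2 * x - 1 / 3| = 2 * |x - 1 / 3| := by
          rw [show 1 - 2 * x - 1 / 3 = (-2) * (x - 1 / 3) by ring, abs_mul]
          norm_num
        rw [this]
        calc _ ≤ _ := h
          _ = _ := by ring
  have glow : ∀ x : ℝ, 0 < x → x ≤ 1 / 2 → g x = 1 := by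
    intro x h1 h2
    rcases h2.lt_or_eq with h2 | h2
    · by_cases h3 : x = 1 / 3
      · rw [h3, g3]
      · have hp : 0 < |x - 1 / 3| := abs_pos.mpr (sub_ne_zero.mpr h3)
        obtain ⟨n, hn⟩ := pow_unbounded_of_one_lt (1 / 12 / |x - 1 / 3|) (one_lt_two : (1 : ℝ) < 2)
        exact key n x h1 h2 ((div_lt_iff₀ hp).mp hn).le
    · rw [h2, ghalf]
  have gunit : ∀ x : ℝ, 0 < x → x ≤ 1 → g x = 1 := by
    intro x h1 h2
    rcases le_or_gt x (1 / 2) with h | h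
    · exact glow x h1 h
    · rcases h2.lt_or_eq with h2 | h2
      · have hr := grefl x h1 h2
        rwa [glow (1 - x) (by linarith) (by linarith), mul_one] at hr
      · rw [h2, g1]
  have gall : ∀ n : ℕ, ∀ x : ℝ, 0 < x → x ≤ n + 1 → g x = 1 := by
    intro n
    induction n with
    | zero => intro x h1 h2; exact gunit x h1 (by simpa using h2)
    | succ n ih =>
      intro x h1 h2
      push_cast at h2
      rcases le_or_gt x 1 with h | h
      · exact gunit x h1 h
      · have hr := grec (x - 1) (by linarith)
        rw [sub_add_cancel] at hr
        rw [hr]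
        exact ih _ (by linarith) (by linarith)
  intro x hx
  obtain ⟨n, hn⟩ := exists_nat_ge x
  rw [hfg x hx, gall n x hx (by linarith), one_mul]
end

section
/- The set (0, 1/3] ∪ {1} is a fundamental set for the Gamma function: if f : (0,∞) → ℝ satisfies the gamma functional identities and f(x) = Γ(x) for every x ∈ (0, 1/3] ∪ {1}, then f(x) = Γ(x) for every x > 0. -/
/-- The set `(0, 1/3] ∪ {1}` is a fundamental set for the Gamma function: if
`f : (0,∞) → ℝ` satisfies the gamma functional identities (recurrence, duplication,
reflection) and agrees with `Γ` on `(0, 1/3] ∪ {1}`, then `f = Γ` on `(0, ∞)`. -/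
theorem fundamental_set_third (f : ℝ → ℝ)
    (hrec : ∀ x : ℝ, 0 < x → f (x + 1) = x * f x)
    (hdup : ∀ x : ℝ, 0 < x →
      Real.sqrt Real.pi * f x = (2 : ℝ) ^ (x - 1) * f (x / 2) * f (x / 2 + 1 / 2))
    (hrefl : ∀ x : ℝ, 0 < x → x < 1 → f x * f (1 - x) = Real.pi / Real.sin (Real.pi * x))
    (hagree : ∀ x ∈ Set.Ioc (0 : ℝ) (1 / 3) ∪ ({1} : Set ℝ), f x = Real.Gamma x) :
    ∀ x : ℝ, 0 < x → f x = Real.Gamma x := by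
  have hG : ∀ x : ℝ, 0 < x → 0 < Real.Gamma x := fun x hx => Real.Gamma_pos_of_pos hx
  have h1 : ∀ x : ℝ, 0 < x → x ≤ 1 / 3 → f x = Real.Gamma x := fun x hx hx' =>
    hagree x (Or.inl ⟨hx, hx'⟩)
  -- reflection transfers agreement from `x` to `1 - x`
  have hr : ∀ x : ℝ, 0 < x → x < 1 → f x = Real.Gamma x → f (1 - x) = Real.Gamma (1 - x) := by
    intro x hx hx1 h
    have e := hrefl x hx hx1
    rw [← Real.Gamma_mul_Gamma_one_sub, h] at e
    exact mul_left_cancel₀ (hG x hx).ne' e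
  have h2 : ∀ x : ℝ, 2 / 3 ≤ x → x < 1 → f x = Real.Gamma x := by
    intro x hx hx1
    have := hr (1 - x) (by linarith) (by linarith) (h1 _ (by linarith) (by linarith))
    simpa using this
  -- duplication on the interval `[1/3, 1/2]`
  have h3 : ∀ x : ℝ, 1 / 3 ≤ x → x ≤ 1 / 2 → f x = Real.Gamma x := by
    intro x hx hx1
    have e := hdup x (by linarith)
    rw [h1 (x / 2) (by linarith) (by linarith), h2 (x / 2 + 1 / 2) (by linarith) (by linarith),
      mul_assoc, Real.Gamma_mul_Gamma_add_half, show 2 * (x / 2) = x by ring] at e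
    have hp : (2 : ℝ) ^ (x - 1) * (2 : ℝ) ^ (1 - x) = 1 := by
      rw [← Real.rpow_add (by norm_num)]
      simp
    have hs : Real.sqrt Real.pi ≠ 0 := (Real.sqrt_pos.mpr Real.pi_pos).ne'
    apply mul_left_cancel₀ hs
    rw [e]
    linear_combination (Real.Gamma x * Real.sqrt Real.pi) * hp
  have h4 : ∀ x : ℝ, 0 < x → x ≤ 1 → f x = Real.Gamma x := by
    intro x hx hx1
    rcases hx1.eq_or_lt with h | h
    · exact hagree x (Or.inr h)
    rcases le_total x (1 / 3) with a | a
    · exact h1 x hx a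
    rcases le_total x (1 / 2) with b | b
    · exact h3 x a b
    rcases le_total (2 / 3) x with c | c
    · exact h2 x c h
    have := hr (1 - x) (by linarith) (by linarith) (h3 _ (by linarith) (by linarith))
    simpa using this
  have h5 : ∀ n : ℕ, ∀ x : ℝ, 0 < x → x ≤ n + 1 → f x = Real.Gamma x := by
    intro n
    induction n with
    | zero => intro x hx hx1; exact h4 x hx (by simpa using hx1)
    | succ n ih =>
      intro x hx hx1
      push_cast at hx1
      rcases le_or_gt x 1 with h | h
      · exact h4 x hx h
      have e := hrec (x - 1) (by linarith)
      rw [ih (x - 1) (by linarith) (by linarith),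
        ← Real.Gamma_add_one (sub_pos.mpr h).ne'] at e
      simpa using e
  intro x hx
  obtain ⟨n, hn⟩ := exists_nat_ge x
  exact h5 n x hx (by linarith)
end

section
/- Landau's lemma: let δ ∈ (0,1] and let 0 ≤ α < β ≤ 1. Then there exists a non-negative integer m such that, setting I = (α/2^m, β/2^m] and J_i = (α/2^i + 1/2, β/2^i + 1/2] for 1 ≤ i ≤ m, one has: (i) I ⊆ (0, δ/2] and J_i ⊆ (δ/2, 1] for each i; (ii) the lengths satisfy |I| + Σ_{i=1}^m |J_i| = β − α and |I| > (δ/4)(β − α); and (iii) any function f : (0,∞) → ℝ satisfying √π·f(x) = 2^{x−1}·f(x/2)·f(x/2+1/2) for all x > 0 and agreeing with Γ on I ∪ J_1 ∪ ⋯ ∪ J_m agrees with Γ on (α, β]. -/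
theorem landau_sum (c : ℝ) (m : ℕ) :
    c / 2 ^ m + ∑ i ∈ Finset.Icc 1 m, c / 2 ^ i = c := by
  induction m with
  | zero => simp
  | succ k ih =>
    rw [Finset.sum_Icc_succ_top (by omega)]
    have : c / 2 ^ k = c / 2 ^ (k + 1) + c / 2 ^ (k + 1) := by
      rw [pow_succ]; field_simp; ring
    linarith

theorem gamma_dup (x : ℝ) :
    Real.sqrt Real.pi * Real.Gamma x =
      (2 : ℝ) ^ (x - 1) * Real.Gamma (x / 2) * Real.Gamma (x / 2 + 1 / 2) := by
  rw [mul_assoc, Real.Gamma_mul_Gamma_add_half, mul_div_cancel₀ x two_ne_zero]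
  have h : (2 : ℝ) ^ (x - 1) * (2 : ℝ) ^ (1 - x) = 1 := by
    rw [← Real.rpow_add two_pos]; simp
  linear_combination (-(Real.sqrt Real.pi * Real.Gamma x)) * h

theorem landau_descend (f : ℝ → ℝ) (x : ℝ) (hx : 0 < x)
    (hf : ∀ x : ℝ, 0 < x →
      Real.sqrt Real.pi * f x = (2 : ℝ) ^ (x - 1) * f (x / 2) * f (x / 2 + 1 / 2)) (m : ℕ)
    (h0 : f (x / 2 ^ m) = Real.Gamma (x / 2 ^ m))
    (h1 : ∀ i : ℕ, 1 ≤ i → i ≤ m → f (x / 2 ^ i + 1 / 2) = Real.Gamma (x / 2 ^ i + 1 / 2)) :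
    f x = Real.Gamma x := by
  induction m with
  | zero => simpa using h0
  | succ k ih =>
    refine ih ?_ (fun i hi hk => h1 i hi (by omega))
    have e : x / 2 ^ (k + 1) = x / 2 ^ k / 2 := by rw [pow_succ, div_div]
    have h2 := h1 (k + 1) (by omega) le_rfl
    have h3 := hf (x / 2 ^ k) (by positivity)
    rw [e] at h0 h2
    rw [h0, h2, ← gamma_dup] at h3
    exact mul_left_cancel₀ (Real.sqrt_pos.2 Real.pi_pos).ne' h3

theorem landau_exists (δ : ℝ) (hδ₀ : 0 < δ) (hδ₁ : δ ≤ 1) :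
    ∃ m : ℕ, 1 / (2 : ℝ) ^ m ≤ δ / 2 ∧ δ / 4 < 1 / (2 : ℝ) ^ m := by
  classical
  have hex : ∃ m : ℕ, 1 / (2 : ℝ) ^ m ≤ δ / 2 := by
    obtain ⟨n, hn⟩ := exists_pow_lt_of_lt_one (half_pos hδ₀) (by norm_num : (1 / 2 : ℝ) < 1)
    exact ⟨n, by rw [← one_div_pow]; exact hn.le⟩
  have hs := Nat.find_spec hex
  have hm := fun k => Nat.find_min hex (m := k)
  generalize Nat.find hex = m at hs hm
  refine ⟨m, hs, ?_⟩
  cases m with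
  | zero => norm_num at hs; linarith
  | succ k =>
    have := not_le.1 (hm k (by omega))
    have e : 1 / (2 : ℝ) ^ (k + 1) = 1 / 2 ^ k / 2 := by rw [pow_succ, div_div]
    rw [e]; linarith

/-- Landau's lemma: for `δ ∈ (0,1]` and `0 ≤ α < β ≤ 1`, there is `m : ℕ` such that,
with `I = (α/2^m, β/2^m]` and `Jᵢ = (α/2^i + 1/2, β/2^i + 1/2]` for `1 ≤ i ≤ m`:
`I ⊆ (0, δ/2]`, each `Jᵢ ⊆ (δ/2, 1]`, the lengths satisfy
`|I| + Σ |Jᵢ| = β − α` and `|I| > (δ/4)(β − α)`, and any `f` satisfying the duplication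
identity which agrees with `Γ` on `I ∪ J₁ ∪ ⋯ ∪ J_m` agrees with `Γ` on `(α, β]`. -/
theorem landau_lemma (δ α β : ℝ) (hδ₀ : 0 < δ) (hδ₁ : δ ≤ 1)
    (hα : 0 ≤ α) (hαβ : α < β) (hβ : β ≤ 1) :
    ∃ m : ℕ,
      Set.Ioc (α / 2 ^ m) (β / 2 ^ m) ⊆ Set.Ioc 0 (δ / 2) ∧
      (∀ i : ℕ, 1 ≤ i → i ≤ m →
        Set.Ioc (α / 2 ^ i + 1 / 2) (β / 2 ^ i + 1 / 2) ⊆ Set.Ioc (δ / 2) 1) ∧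
      ((β - α) / 2 ^ m + ∑ i ∈ Finset.Icc 1 m, (β - α) / 2 ^ i = β - α) ∧
      (δ / 4 * (β - α) < (β - α) / 2 ^ m) ∧
      ∀ f : ℝ → ℝ,
        (∀ x : ℝ, 0 < x →
          Real.sqrt Real.pi * f x = (2 : ℝ) ^ (x - 1) * f (x / 2) * f (x / 2 + 1 / 2)) →
        (∀ x : ℝ, (x ∈ Set.Ioc (α / 2 ^ m) (β / 2 ^ m) ∨
            ∃ i : ℕ, 1 ≤ i ∧ i ≤ m ∧ x ∈ Set.Ioc (α / 2 ^ i + 1 / 2) (β / 2 ^ i + 1 / 2)) →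
          f x = Real.Gamma x) →
        ∀ x ∈ Set.Ioc α β, f x = Real.Gamma x := by
  obtain ⟨m, hm1, hm2⟩ := landau_exists δ hδ₀ hδ₁
  have hc : 0 < β - α := sub_pos.2 hαβ
  refine ⟨m, ?_, ?_, landau_sum _ m, ?_, ?_⟩
  · rintro x ⟨h1, h2⟩
    have h3 : 0 ≤ α / 2 ^ m := by positivity
    have h4 : β / 2 ^ m ≤ 1 / 2 ^ m := by gcongr
    exact ⟨by linarith, by linarith⟩
  · rintro i hi - x ⟨h1, h2⟩
    have h3 : 0 ≤ α / 2 ^ i := by positivity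
    have h4 : β / 2 ^ i ≤ 1 / 2 ^ 1 := by
      gcongr
      norm_num
    exact ⟨by linarith, by linarith⟩
  · have := mul_lt_mul_of_pos_right hm2 hc
    rwa [one_div_mul_eq_div] at this
  · rintro f hf hg x ⟨h1, h2⟩
    refine landau_descend f x (by linarith) hf m ?_ ?_
    · exact hg _ (Or.inl ⟨by gcongr, by gcongr⟩)
    · intro i hi hk
      exact hg _ (Or.inr ⟨i, hi, hk, by gcongr, by gcongr⟩)
end

section
/- Landau's theorem: the Gamma function is a germinating function. Precisely: for every δ > 0 there exists a Lebesgue-measurable set S ⊆ (0,∞) with Lebesgue measure less than δ such that any f : (0,∞) → ℝ satisfying the gamma functional identities with f(x) = Γ(x) for all x ∈ S satisfies f(x) = Γ(x) for all x > 0. -/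
open MeasureTheory

/-- Points of `(0,1]` whose first `N` digits in base `M` are nonzero. -/
def landauE (M : ℕ) : ℕ → Set ℝ
  | 0 => Set.Ioc 0 1
  | N + 1 => ⋃ j ∈ Finset.range (M - 1),
      (fun y : ℝ => (M : ℝ) * y) ⁻¹' ((fun y : ℝ => y - ((j : ℝ) + 1)) ⁻¹' landauE M N)

lemma landauE_meas (M N : ℕ) : MeasurableSet (landauE M N) := by
  induction N with
  | zero => exact measurableSet_Ioc
  | succ N ih =>
    refine Finset.measurableSet_biUnion _ fun j _ => ?_
    have h1 : Measurable (fun y : ℝ => (M : ℝ) * y) := by fun_prop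
    have h2 : Measurable (fun y : ℝ => y - ((j : ℝ) + 1)) := by fun_prop
    exact h1 (h2 ih)

lemma landauE_sub (M N : ℕ) (hM : 0 < M) : landauE M N ⊆ Set.Ioi 0 := by
  induction N with
  | zero => intro x hx; exact hx.1
  | succ N ih =>
    intro x hx
    simp only [landauE, Set.mem_iUnion, Set.mem_preimage] at hx
    obtain ⟨j, _, hx⟩ := hx
    have h := ih hx
    simp only [Set.mem_Ioi] at h ⊢
    have hM' : (0 : ℝ) < M := by exact_mod_cast hM
    have : (0 : ℝ) ≤ j := by positivity
    by_contra hc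
    nlinarith

lemma landauE_le (M N : ℕ) (hM : 0 < M) : landauE M N ⊆ Set.Iic 1 := by
  induction N with
  | zero => intro x hx; exact hx.2
  | succ N ih =>
    intro x hx
    simp only [landauE, Set.mem_iUnion, Set.mem_preimage, Finset.mem_range] at hx
    obtain ⟨j, hj, hx⟩ := hx
    have h := ih hx
    simp only [Set.mem_Iic] at h ⊢
    have hM' : (0 : ℝ) < M := by exact_mod_cast hM
    have : (j : ℝ) + 1 + 1 ≤ M := by
      have : j + 1 + 1 ≤ M := by omega
      exact_mod_cast this
    by_contra hc
    nlinarith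

lemma landauE_vol (M N : ℕ) (hM : 0 < M) :
    volume (landauE M N) ≤ ENNReal.ofReal ((1 - 1 / (M : ℝ)) ^ N) := by
  have hM' : (0 : ℝ) < M := by exact_mod_cast hM
  have hM1 : (1 : ℝ) ≤ M := by exact_mod_cast hM
  induction N with
  | zero => simp [landauE]
  | succ N ih =>
    refine (measure_biUnion_finset_le _ _).trans ?_
    have key : ∀ j ∈ Finset.range (M - 1), volume ((fun y : ℝ => (M : ℝ) * y) ⁻¹'
        ((fun y : ℝ => y - ((j : ℝ) + 1)) ⁻¹' landauE M N))
        ≤ ENNReal.ofReal ((M : ℝ)⁻¹ * (1 - 1 / (M : ℝ)) ^ N) := by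
      intro j _
      rw [Real.volume_preimage_mul_left hM'.ne', show (fun y : ℝ => y - ((j : ℝ) + 1)) = (fun y : ℝ => y + (-((j : ℝ) + 1))) from rfl,
        measure_preimage_add_right,
        abs_of_pos (by positivity), ENNReal.ofReal_mul (by positivity)]
      gcongr
    refine (Finset.sum_le_sum key).trans ?_
    rw [Finset.sum_const, Finset.card_range, nsmul_eq_mul, ← ENNReal.ofReal_natCast,
      ← ENNReal.ofReal_mul (by positivity)]
    apply le_of_eq
    congr 1
    rw [Nat.cast_sub hM]
    push_cast
    rw [pow_succ]
    field_simp

lemma landau_dup (f : ℝ → ℝ)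
    (h2 : ∀ x : ℝ, 0 < x →
          Real.sqrt Real.pi * f x = (2 : ℝ) ^ (x - 1) * f (x / 2) * f (x / 2 + 1 / 2))
    (a : ℕ) : ∀ x : ℝ, 0 < x →
      (∀ j < 2 ^ a, f ((x + (j : ℕ)) / 2 ^ a) = Real.Gamma ((x + (j : ℕ)) / 2 ^ a)) →
      f x = Real.Gamma x := by
  induction a with
  | zero => intro x _ h; simpa using h 0 (by simp)
  | succ a ih =>
    intro x hx h
    have e1 : f (x / 2) = Real.Gamma (x / 2) := by
      apply ih _ (by positivity)
      intro j hj
      have := h (2 * j) (by rw [pow_succ]; omega)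
      have e : (x + ((2 * j : ℕ) : ℝ)) / 2 ^ (a + 1) = (x / 2 + j) / 2 ^ a := by
        push_cast; field_simp; ring
      rwa [e] at this
    have e2 : f (x / 2 + 1 / 2) = Real.Gamma (x / 2 + 1 / 2) := by
      apply ih _ (by positivity)
      intro j hj
      have := h (2 * j + 1) (by rw [pow_succ]; omega)
      have e : (x + ((2 * j + 1 : ℕ) : ℝ)) / 2 ^ (a + 1) = (x / 2 + 1 / 2 + j) / 2 ^ a := by
        push_cast; field_simp; ring
      rwa [e] at this
    have hd := Real.Gamma_mul_Gamma_add_half (x / 2)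
    have h := h2 x hx
    rw [e1, e2, mul_assoc, hd] at h
    have e : 2 * (x / 2) = x := by ring
    rw [e] at h
    have hp : (2 : ℝ) ^ (x - 1) * (2 : ℝ) ^ (1 - x) = 1 := by
      rw [← Real.rpow_add (by norm_num)]; simp
    have hs : Real.sqrt Real.pi ≠ 0 := by positivity
    apply mul_left_cancel₀ hs
    rw [h]
    linear_combination (Real.Gamma x * Real.sqrt Real.pi) * hp

/-- Landau's theorem: the Gamma function is a germinating function. For every `δ > 0`
there is a measurable set `S ⊆ (0,∞)` of Lebesgue measure less than `δ` such that any
`f : (0,∞) → ℝ` satisfying the gamma functional identities and agreeing with `Γ` on `S`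
agrees with `Γ` on all of `(0,∞)`. -/
theorem landau_germinating (δ : ℝ) (hδ : 0 < δ) :
    ∃ S : Set ℝ, MeasurableSet S ∧ S ⊆ Set.Ioi 0 ∧ volume S < ENNReal.ofReal δ ∧
      ∀ f : ℝ → ℝ,
        (∀ x : ℝ, 0 < x → f (x + 1) = x * f x) →
        (∀ x : ℝ, 0 < x →
          Real.sqrt Real.pi * f x = (2 : ℝ) ^ (x - 1) * f (x / 2) * f (x / 2 + 1 / 2)) →
        (∀ x : ℝ, 0 < x → x < 1 → f x * f (1 - x) = Real.pi / Real.sin (Real.pi * x)) →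
        (∀ x ∈ S, f x = Real.Gamma x) →
        ∀ x : ℝ, 0 < x → f x = Real.Gamma x := by
  obtain ⟨a, ha⟩ := exists_pow_lt_of_lt_one (half_pos hδ) (by norm_num : (1 / 2 : ℝ) < 1)
  have hM : 0 < 2 ^ a := by positivity
  have hMr : (1 : ℝ) ≤ ((2 ^ a : ℕ) : ℝ) := by exact_mod_cast hM
  have hr0 : 0 ≤ 1 - 1 / ((2 ^ a : ℕ) : ℝ) := by
    rw [sub_nonneg, div_le_one (by linarith)]; exact hMr
  obtain ⟨N, hN⟩ := exists_pow_lt_of_lt_one (half_pos hδ)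
    (show 1 - 1 / ((2 ^ a : ℕ) : ℝ) < 1 by
      have : 0 < 1 / ((2 ^ a : ℕ) : ℝ) := by positivity
      linarith)
  refine ⟨Set.Ioc 0 ((1 / 2) ^ a) ∪ landauE (2 ^ a) N,
    measurableSet_Ioc.union (landauE_meas _ _),
    Set.union_subset (fun x hx => hx.1) (landauE_sub _ _ hM), ?_, ?_⟩
  · refine (measure_union_le _ _).trans_lt ?_
    refine (add_le_add le_rfl (landauE_vol _ N hM)).trans_lt ?_
    rw [Real.volume_Ioc, ← ENNReal.ofReal_add (by simp) (pow_nonneg hr0 N)]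
    rw [ENNReal.ofReal_lt_ofReal_iff hδ]
    linarith
  · intro f h1 h2 _ hS
    have hE : ∀ k ≤ N, ∀ x ∈ landauE (2 ^ a) (N - k), f x = Real.Gamma x := by
      intro k
      induction k with
      | zero => intro _ x hx; exact hS x (Or.inr hx)
      | succ k ih =>
        intro hk x hx
        have hpos : ∀ x ∈ landauE (2 ^ a) (N - (k + 1)), 0 < x := fun x hx =>
          landauE_sub _ _ hM hx
        refine landau_dup f h2 a x (hpos x hx) fun j hj => ?_
        rcases Nat.eq_zero_or_pos j with rfl | hj0
        · have hx1 := landauE_le _ _ hM hx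
          apply hS
          left
          have := hpos x hx
          refine ⟨by positivity, ?_⟩
          simp only [Nat.cast_zero, add_zero, one_div, inv_pow]
          rw [div_eq_mul_inv]
          have : (0 : ℝ) < (2 ^ a)⁻¹ := by positivity
          simp only [Set.mem_Iic] at hx1
          nlinarith
        · apply ih (by omega)
          have e : N - k = (N - (k + 1)) + 1 := by omega
          rw [e]
          simp only [landauE, Set.mem_iUnion, Set.mem_preimage, Finset.mem_range]
          refine ⟨j - 1, by omega, ?_⟩
          have : ((2 ^ a : ℕ) : ℝ) * ((x + j) / 2 ^ a) - (((j - 1 : ℕ) : ℝ) + 1) = x := by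
            rw [Nat.cast_sub hj0]; push_cast; field_simp; ring
          rw [this]; exact hx
    have h01 : ∀ x ∈ Set.Ioc (0 : ℝ) 1, f x = Real.Gamma x := by
      have := hE N le_rfl
      rwa [Nat.sub_self] at this
    have hn : ∀ n : ℕ, ∀ x : ℝ, 0 < x → x ≤ n + 1 → f x = Real.Gamma x := by
      intro n
      induction n with
      | zero => intro x hx hx1; exact h01 x ⟨hx, by simpa using hx1⟩
      | succ n ih =>
        intro x hx hx1
        by_cases hc : x ≤ 1
        · exact h01 x ⟨hx, hc⟩
        · push Not at hc
          push_cast at hx1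
          have h := h1 (x - 1) (by linarith)
          have hG := Real.Gamma_add_one (s := x - 1) (by linarith)
          rw [sub_add_cancel] at h hG
          rw [h, hG, ih (x - 1) (by linarith) (by linarith)]
    intro x hx
    obtain ⟨n, hnx⟩ := exists_nat_ge x
    exact hn n x hx (by linarith)
end

section
/- Complex analogue of Landau's theorem: let D = ℂ ∖ {0, −1, −2, …}. For every δ > 0 there exists a Lebesgue-measurable set S ⊆ D with two-dimensional Lebesgue measure less than δ such that any function f : ℂ → ℂ satisfying f(z+1) = z·f(z) for all z ∈ D with z+1 ∈ D, √π·f(z) = 2^{z−1}·f(z/2)·f(z/2+1/2) for all z with Re z > 0, and f(z)·f(1−z) = π/sin(πz) for all z ∉ ℤ, and agreeing with Γ on S, must agree with Γ on all of D. -/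
open MeasureTheory

lemma aux_volume (ε : ℝ) :
    volume {z : ℂ | z.re ∈ Set.Ico (1:ℝ) 2 ∧ z.im ∈ Set.Ioo (-ε) ε} = ENNReal.ofReal (2 * ε) := by
  have h : {z : ℂ | z.re ∈ Set.Ico (1:ℝ) 2 ∧ z.im ∈ Set.Ioo (-ε) ε}
      = Complex.measurableEquivRealProd ⁻¹' (Set.Ico (1:ℝ) 2 ×ˢ Set.Ioo (-ε) ε) := by
    ext z; simp [Complex.measurableEquivRealProd]
  rw [h, Complex.volume_preserving_equiv_real_prod.measure_preimage
    (measurableSet_Ico.prod measurableSet_Ioo).nullMeasurableSet, Measure.volume_eq_prod,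
    Measure.prod_prod, Real.volume_Ico, Real.volume_Ioo]
  rw [show (2:ℝ) - 1 = 1 by norm_num, ENNReal.ofReal_one, one_mul]
  congr 1
  ring

/-- Complex analogue of Landau's theorem: with `D = ℂ ∖ {0, −1, −2, …}`, for every `δ > 0`
there is a measurable set `S ⊆ D` of two-dimensional Lebesgue measure less than `δ` such
that any `f : ℂ → ℂ` satisfying the recurrence on `D`, the duplication formula on the right
half-plane, and the reflection formula off the integers, which agrees with `Γ` on `S`,
agrees with `Γ` on all of `D`. -/
theorem landau_germinating_complex (δ : ℝ) (hδ : 0 < δ) :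
    ∃ S : Set ℂ, MeasurableSet S ∧ S ⊆ {z : ℂ | ∀ n : ℕ, z ≠ -(n : ℂ)} ∧
      volume S < ENNReal.ofReal δ ∧
      ∀ f : ℂ → ℂ,
        (∀ z : ℂ, (∀ n : ℕ, z ≠ -(n : ℂ)) → (∀ n : ℕ, z + 1 ≠ -(n : ℂ)) →
          f (z + 1) = z * f z) →
        (∀ z : ℂ, 0 < z.re →
          (Real.sqrt Real.pi : ℂ) * f z =
            (2 : ℂ) ^ (z - 1) * f (z / 2) * f (z / 2 + 1 / 2)) →
        (∀ z : ℂ, (∀ n : ℤ, z ≠ (n : ℂ)) →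
          f z * f (1 - z) = (Real.pi : ℂ) / Complex.sin (Real.pi * z)) →
        (∀ z ∈ S, f z = Complex.Gamma z) →
        ∀ z : ℂ, (∀ n : ℕ, z ≠ -(n : ℂ)) → f z = Complex.Gamma z := by
  have hpos : ∀ z : ℂ, 0 < z.re → ∀ n : ℕ, z ≠ -(n : ℂ) := by
    intro z hz n h
    rw [h] at hz
    simp at hz
    have : (0:ℝ) ≤ n := Nat.cast_nonneg n
    linarith
  refine ⟨{z : ℂ | z.re ∈ Set.Ico (1:ℝ) 2 ∧ z.im ∈ Set.Ioo (-(δ/4)) (δ/4)}, ?_, ?_, ?_, ?_⟩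
  · exact (Complex.measurable_re measurableSet_Ico).inter (Complex.measurable_im measurableSet_Ioo)
  · intro z hz
    exact hpos z (by linarith [hz.1.1])
  · rw [aux_volume]
    exact (ENNReal.ofReal_lt_ofReal_iff hδ).2 (by linarith)
  intro f hrec hdup _ hS
  have hD1 : ∀ z : ℂ, (∀ n : ℕ, z ≠ -(n : ℂ)) → ∀ n : ℕ, z + 1 ≠ -(n : ℂ) := by
    intro z hz n h
    apply hz (n + 1)
    push_cast
    linear_combination h
  have hne : ∀ z : ℂ, (∀ n : ℕ, z ≠ -(n : ℂ)) → z ≠ 0 := by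
    intro z hz h
    apply hz 0
    simp [h]
  have back : ∀ z : ℂ, (∀ n : ℕ, z ≠ -(n : ℂ)) → f (z + 1) = Complex.Gamma (z + 1) →
      f z = Complex.Gamma z := by
    intro z hz h
    rw [hrec z hz (hD1 z hz), Complex.Gamma_add_one z (hne z hz)] at h
    exact mul_left_cancel₀ (hne z hz) h
  have fwd : ∀ z : ℂ, (∀ n : ℕ, z ≠ -(n : ℂ)) → f z = Complex.Gamma z →
      f (z + 1) = Complex.Gamma (z + 1) := by
    intro z hz h
    rw [hrec z hz (hD1 z hz), Complex.Gamma_add_one z (hne z hz), h]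
  have strip0 : ∀ n : ℕ, ∀ z : ℂ, 0 < z.re → z.re < n + 2 → |z.im| < δ/4 →
      f z = Complex.Gamma z := by
    intro n
    induction n with
    | zero =>
      intro z h0 h1 h2
      have h1' : z.re < 2 := by simpa using h1
      by_cases h : 1 ≤ z.re
      · exact hS z ⟨⟨h, h1'⟩, abs_lt.1 h2⟩
      · push Not at h
        refine back z (hpos z h0) (hS _ ⟨⟨?_, ?_⟩, ?_⟩)
        · simp; linarith
        · simp; linarith
        · simpa using abs_lt.1 h2
    | succ n ih =>
      intro z h0 h1 h2
      push_cast at h1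
      by_cases h : z.re < n + 2
      · exact ih z h0 h h2
      · push Not at h
        have hn : (0:ℝ) ≤ n := Nat.cast_nonneg n
        have hz0 : 0 < (z - 1).re := by simp; linarith
        have := fwd (z - 1) (hpos _ hz0) (ih (z - 1) hz0 (by simp; linarith) (by simpa using h2))
        simpa using this
  have strip : ∀ n : ℕ, ∀ z : ℂ, 0 < z.re → |z.im| < 2 ^ n * (δ/4) →
      f z = Complex.Gamma z := by
    intro n
    induction n with
    | zero =>
      intro z h0 h2
      obtain ⟨m, hm⟩ := exists_nat_gt z.re
      exact strip0 m z h0 (by linarith) (by simpa using h2)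
    | succ n ih =>
      intro z h0 h2
      have hre : (z / 2).re = z.re / 2 := by simp
      have him : (z / 2).im = z.im / 2 := by simp
      have hb : |z.im / 2| < 2 ^ n * (δ/4) := by
        rw [abs_div, abs_two]
        rw [pow_succ] at h2
        linarith
      have e1 := ih (z / 2) (by rw [hre]; linarith) (by rw [him]; exact hb)
      have e2 := ih (z / 2 + 1 / 2) (by rw [Complex.add_re, hre]; norm_num; linarith)
        (by rw [Complex.add_im, him]; simpa using hb)
      have hd := hdup z h0
      have hG := Complex.Gamma_mul_Gamma_add_half (z / 2)
      rw [e1, e2, mul_assoc, hG] at hd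
      have hz2 : 2 * (z / 2) = z := by ring
      have hp : (2:ℂ) ^ (z - 1) * (2:ℂ) ^ (1 - z) = 1 := by
        rw [← Complex.cpow_add _ _ two_ne_zero]
        simp
      rw [hz2] at hd
      have hpi : (Real.sqrt Real.pi : ℂ) ≠ 0 := by
        exact_mod_cast (Real.sqrt_pos.2 Real.pi_pos).ne'
      apply mul_left_cancel₀ hpi
      linear_combination hd + Complex.Gamma z * (Real.sqrt Real.pi : ℂ) * hp
  have right : ∀ z : ℂ, 0 < z.re → f z = Complex.Gamma z := by
    intro z h0
    obtain ⟨n, hn⟩ := pow_unbounded_of_one_lt (|z.im| / (δ/4)) (one_lt_two : (1:ℝ) < 2)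
    exact strip n z h0 ((div_lt_iff₀ (by linarith)).1 hn)
  have all : ∀ n : ℕ, ∀ z : ℂ, (∀ n : ℕ, z ≠ -(n : ℂ)) → -(n:ℝ) < z.re →
      f z = Complex.Gamma z := by
    intro n
    induction n with
    | zero => intro z _ h; exact right z (by simpa using h)
    | succ n ih =>
      intro z hz h
      push_cast at h
      exact back z hz (ih (z + 1) (hD1 z hz) (by simp; linarith))
  intro z hz
  obtain ⟨n, hn⟩ := exists_nat_gt (-z.re)
  exact all n z hz (by linarith)
end

section
/- Schlömilch's additive analogue of the duplication formula: let m be a non-negative integer and let z ∈ ℂ with Re z > m. Then (2^{z−1}/√π) · Γ((z+m+1)/2) · Γ((z−m)/2) = Σ_{n=0}^{m} (Γ(z−n) / (2ⁿ · n!)) · (m−n+1)_{2n}. -/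
theorem schl_poch_a (m n : ℂ) (k : ℕ) :
    (ascPochhammer ℂ (2 * (k + 1))).eval (m + 1 - (n + 1) + 1) =
      (ascPochhammer ℂ (2 * k)).eval (m - n + 1) * (m - n + 1 + 2 * k) * (m - n + 2 + 2 * k) := by
  have h : m + 1 - (n + 1) + 1 = m - n + 1 := by ring
  rw [h, show 2 * (k + 1) = 2 * k + 1 + 1 by ring, ascPochhammer_succ_eval,
    ascPochhammer_succ_eval]
  push_cast
  ring

theorem schl_poch_b (m n : ℂ) (k : ℕ) :
    (ascPochhammer ℂ (2 * (k + 1))).eval (m - (n + 1) + 1) =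
      (m - n) * ((ascPochhammer ℂ (2 * k)).eval (m - n + 1) * (m - n + 1 + 2 * k)) := by
  have h : m - (n + 1) + 1 = m - n := by ring
  rw [h, show 2 * (k + 1) = 2 * k + 1 + 1 by ring, ascPochhammer_succ_left]
  simp only [Polynomial.eval_mul, Polynomial.eval_X, Polynomial.eval_comp, Polynomial.eval_add,
    Polynomial.eval_one]
  rw [ascPochhammer_succ_eval]
  push_cast
  ring

/-- Schlömilch's additive analogue of the duplication formula: for a non-negative integer
`m` and `z ∈ ℂ` with `Re z > m`,
`(2^{z−1}/√π) · Γ((z+m+1)/2) · Γ((z−m)/2) = Σ_{n=0}^{m} (Γ(z−n)/(2ⁿ·n!)) · (m−n+1)_{2n}`. -/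
theorem schlomilch (m : ℕ) (z : ℂ) (hz : (m : ℝ) < z.re) :
    (2 : ℂ) ^ (z - 1) / (Real.sqrt Real.pi : ℂ) *
        Complex.Gamma ((z + m + 1) / 2) * Complex.Gamma ((z - m) / 2) =
      ∑ n ∈ Finset.range (m + 1),
        Complex.Gamma (z - n) / (2 ^ n * (n.factorial : ℂ)) *
          (ascPochhammer ℂ (2 * n)).eval ((m : ℂ) - n + 1) := by
  induction m generalizing z with
  | zero =>
    have hpi : (Real.sqrt Real.pi : ℂ) ≠ 0 := by
      exact_mod_cast (Real.sqrt_pos.mpr Real.pi_pos).ne'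
    have h := Complex.Gamma_mul_Gamma_add_half (z / 2)
    rw [show z / 2 + 1 / 2 = (z + 1) / 2 by ring, show 2 * (z / 2) = z by ring] at h
    have h2 : (2 : ℂ) ^ (z - 1) * (2 : ℂ) ^ (1 - z) = 1 := by
      rw [← Complex.cpow_add _ _ two_ne_zero]; simp
    simp
    rw [mul_assoc, mul_comm (Complex.Gamma ((z + 1) / 2)), h]
    field_simp
    linear_combination (Complex.Gamma z) * h2
  | succ m ih =>
    push_cast at hz
    have ih' := ih (z - 1) (by simp; linarith)
    have hm0 : (0 : ℝ) ≤ m := Nat.cast_nonneg m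
    have hne : (z + m) / 2 ≠ 0 := by
      intro h
      have h3 : z + m = 0 := by linear_combination 2 * h
      have := congrArg Complex.re h3
      simp at this
      linarith
    have hL : (2 : ℂ) ^ (z - 1) / (Real.sqrt Real.pi : ℂ) *
        Complex.Gamma ((z + (m + 1 : ℕ) + 1) / 2) * Complex.Gamma ((z - (m + 1 : ℕ)) / 2) =
        (z + m) * ((2 : ℂ) ^ (z - 1 - 1) / (Real.sqrt Real.pi : ℂ) *
        Complex.Gamma ((z - 1 + m + 1) / 2) * Complex.Gamma ((z - 1 - m) / 2)) := by
      push_cast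
      rw [show (z + (m + 1) + 1) / 2 = (z + m) / 2 + 1 by ring, Complex.Gamma_add_one _ hne,
        show (z - 1 + m + 1) / 2 = (z + m) / 2 by ring,
        show (z - (m + 1)) / 2 = (z - 1 - m) / 2 by ring,
        Complex.cpow_sub (z - 1) 1 two_ne_zero, Complex.cpow_one]
      ring
    rw [hL, ih', Finset.mul_sum]
    have h1 : ∀ n ∈ Finset.range (m + 1), (z + m) * (Complex.Gamma (z - 1 - n) /
        (2 ^ n * (n.factorial : ℂ)) * (ascPochhammer ℂ (2 * n)).eval ((m : ℂ) - n + 1)) =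
        Complex.Gamma (z - n) / (2 ^ n * (n.factorial : ℂ)) *
          (ascPochhammer ℂ (2 * n)).eval ((m : ℂ) - n + 1) +
        (m + n + 1) * (Complex.Gamma (z - 1 - n) /
        (2 ^ n * (n.factorial : ℂ)) * (ascPochhammer ℂ (2 * n)).eval ((m : ℂ) - n + 1)) := by
      intro n hn
      have hnm : (n : ℝ) ≤ m := by
        exact_mod_cast Nat.lt_succ_iff.mp (Finset.mem_range.mp hn)
      have h0 : z - 1 - n ≠ 0 := by
        intro h
        have := congrArg Complex.re h
        simp at this
        linarith
      have hg := Complex.Gamma_add_one _ h0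
      rw [show z - 1 - n + 1 = z - n by ring] at hg
      rw [hg]
      ring
    rw [Finset.sum_congr rfl h1, Finset.sum_add_distrib]
    have h2 : ∑ n ∈ Finset.range (m + 1), Complex.Gamma (z - n) / (2 ^ n * (n.factorial : ℂ)) *
          (ascPochhammer ℂ (2 * n)).eval ((m : ℂ) - n + 1) =
        ∑ n ∈ Finset.range (m + 1 + 1), Complex.Gamma (z - n) / (2 ^ n * (n.factorial : ℂ)) *
          (ascPochhammer ℂ (2 * n)).eval ((m : ℂ) - n + 1) := by
      rw [Finset.sum_range_succ _ (m + 1)]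
      push_cast
      rw [schl_poch_b]
      simp
    rw [h2, Finset.sum_range_succ' _ (m + 1), Finset.sum_range_succ' _ (m + 1), add_right_comm, ← Finset.sum_add_distrib]
    congr 1
    · refine Finset.sum_congr rfl fun n _ => ?_
      push_cast [Nat.factorial_succ]
      rw [schl_poch_a, schl_poch_b, show z - 1 - (n : ℂ) = z - (n + 1) by ring]
      have hf : (n.factorial : ℂ) ≠ 0 := by exact_mod_cast n.factorial_ne_zero
      have hn1 : (n : ℂ) + 1 ≠ 0 := by exact_mod_cast n.succ_ne_zero
      field_simp
      ring
    · simp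
end

section
/- For all non-negative integers m and l, the binomial coefficient identity C(m+l, m) = Σ_{n=0}^{m} 2^{−(m+n)} · C(m+n, m) · C(2l+m−n, 2l) holds. -/
/-- The series `Σ C(m+n,m) 2^{-(m+n)} X^n`. -/
noncomputable def schF (m : ℕ) : PowerSeries ℝ :=
  PowerSeries.mk fun n => ((m + n).choose m : ℝ) * (1 / 2) ^ (m + n)

/-- The series `Σ C(p+n,p) X^n`. -/
noncomputable def schG (p : ℕ) : PowerSeries ℝ :=
  PowerSeries.mk fun n => ((p + n).choose p : ℝ)

lemma schF_succ (m : ℕ) : schF (m + 1) * (2 - PowerSeries.X) = schF m := by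
  have h2 : (2 : PowerSeries ℝ) = PowerSeries.C (2 : ℝ) := (map_ofNat PowerSeries.C 2).symm
  ext n
  rw [mul_sub, map_sub, h2, PowerSeries.coeff_mul_C]
  cases n with
  | zero =>
    simp [schF, pow_succ]
    ring
  | succ k =>
    rw [PowerSeries.coeff_succ_mul_X]
    simp only [schF, PowerSeries.coeff_mk]
    have h := Nat.choose_succ_succ (m + k + 1) m
    rw [show m + 1 + (k + 1) = (m + k + 1).succ by omega, show m + 1 + k = m + k + 1 by omega,
      show m + (k + 1) = m + k + 1 by omega, h]
    push_cast
    simp only [Nat.succ_eq_add_one, pow_succ]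
    ring

lemma schG_succ (p : ℕ) : schG (p + 1) * (1 - PowerSeries.X) = schG p := by
  ext n
  rw [mul_sub, map_sub, mul_one]
  cases n with
  | zero => simp [schG]
  | succ k =>
    rw [PowerSeries.coeff_succ_mul_X]
    simp only [schG, PowerSeries.coeff_mk]
    have h := Nat.choose_succ_succ (p + k + 1) p
    rw [show p + 1 + (k + 1) = (p + k + 1).succ by omega, show p + 1 + k = p + k + 1 by omega,
      show p + (k + 1) = p + k + 1 by omega, h]
    push_cast
    simp only [Nat.succ_eq_add_one]
    ring

lemma schG_zero : schG 0 * (1 - PowerSeries.X) = 1 := by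
  ext n
  rw [mul_sub, map_sub, mul_one]
  cases n with
  | zero => simp [schG]
  | succ k =>
    rw [PowerSeries.coeff_succ_mul_X]
    simp [schG, PowerSeries.coeff_one]

lemma schF_diag (m : ℕ) :
    PowerSeries.coeff (m + 1) (schF (m + 1) * (1 - PowerSeries.X)) = 0 := by
  rw [mul_sub, map_sub, mul_one, PowerSeries.coeff_succ_mul_X]
  simp only [schF, PowerSeries.coeff_mk]
  have h := Nat.choose_succ_succ (m + 1 + m) m
  have h' : (m + 1 + m).choose m = (m + 1 + m).choose (m + 1) :=
    Nat.choose_symm_of_eq_add (by omega)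
  rw [show m + 1 + (m + 1) = (m + 1 + m).succ by omega, h, h']
  push_cast
  simp only [Nat.succ_eq_add_one, pow_succ]
  ring

lemma sch_coeff (l m : ℕ) :
    PowerSeries.coeff m (schF m * schG (2 * l)) = ((m + l).choose m : ℝ) := by
  induction l generalizing m with
  | zero =>
    induction m with
    | zero => simp [schF, schG]
    | succ m ih =>
      have e : schF (m + 1) * schG (2 * 0)
          = schF (m + 1) * (1 - PowerSeries.X) + (schF m * schG (2 * 0)) * PowerSeries.X := by
        rw [← schF_succ m]
        linear_combination (schF (m + 1) * (1 - PowerSeries.X)) * schG_zero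
      rw [e, map_add, schF_diag, PowerSeries.coeff_succ_mul_X, ih]
      simp
  | succ l ihl =>
    induction m with
    | zero => simp [schF, schG]
    | succ m ih =>
      have e : schF (m + 1) * schG (2 * (l + 1))
          = schF (m + 1) * schG (2 * l) + (schF m * schG (2 * (l + 1))) * PowerSeries.X := by
        rw [← schF_succ m, ← schG_succ (2 * l), ← schG_succ (2 * l + 1)]
        rw [show 2 * (l + 1) = 2 * l + 1 + 1 by ring]
        ring
      rw [e, map_add, PowerSeries.coeff_succ_mul_X, ih]
      have ihl' : PowerSeries.coeff (m + 1) (schF (m + 1) * schG (2 * l))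
        = ((m + 1 + l).choose (m + 1) : ℝ) := by apply ihl
      rw [ihl']
      have h := Nat.choose_succ_succ (m + l + 1) m
      rw [show m + 1 + (l + 1) = (m + l + 1).succ by omega, show m + 1 + l = m + l + 1 by omega,
        show m + (l + 1) = m + l + 1 by omega, h]
      push_cast
      simp only [Nat.succ_eq_add_one]
      ring

/-- For all non-negative integers `m` and `l`,
`C(m+l, m) = Σ_{n=0}^{m} 2^{−(m+n)} · C(m+n, m) · C(2l+m−n, 2l)`. -/
theorem schlomilch_binomial (m l : ℕ) :
    ((m + l).choose m : ℝ) =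
      ∑ n ∈ Finset.range (m + 1),
        (2 : ℝ) ^ (-((m : ℤ) + (n : ℤ))) * ((m + n).choose m : ℝ) *
          ((2 * l + m - n).choose (2 * l) : ℝ) := by
  rw [← sch_coeff, PowerSeries.coeff_mul, Finset.Nat.sum_antidiagonal_eq_sum_range_succ_mk]
  apply Finset.sum_congr rfl
  intro n hn
  have hn' : n ≤ m := by simpa [Nat.lt_succ_iff] using hn
  simp only [schF, schG, PowerSeries.coeff_mk]
  rw [show 2 * l + (m - n) = 2 * l + m - n by omega, zpow_neg,
    show ((m : ℤ) + (n : ℤ)) = ((m + n : ℕ) : ℤ) by push_cast; rfl, zpow_natCast, one_div, inv_pow]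
  ring
end

section
/- Generalized Schlömilch formula: let w, z ∈ ℂ with w ∉ ℤ, z ∉ ℤ, and w + z − 1/2 ∉ ℤ. Then the series Σ_{n=0}^{∞} (Γ(w+z−n−1/2) / (2ⁿ · n!)) · (w−z−n+1/2)_{2n} converges, and its sum equals (1/√(2π)) · 2^{w+z} · Γ(w) · Γ(z) / (1 − cot(πw)·cot(πz)). -/
open Filter Topology in
theorem schlo_ratio (b c : ℂ) : Tendsto (fun n : ℕ => ((b + n) * (1 - b + n)) / (2 * (c + n) * (n + 1))) atTop (𝓝 (1/2 : ℂ)) := by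
  have h1 := tendsto_add_mul_div_add_mul_atTop_nhds (𝕜 := ℂ) b c 1 one_ne_zero
  have h2 := tendsto_add_mul_div_add_mul_atTop_nhds (𝕜 := ℂ) (1 - b) 1 1 one_ne_zero
  have := (h1.mul h2).mul_const (1/2 : ℂ)
  norm_num at this
  refine Tendsto.congr (fun n => ?_) (by norm_num; exact this)
  rw [add_comm (1 : ℂ) (n : ℂ)]
  simp only [div_eq_mul_inv, mul_inv]
  ring

/-- terms of the Bailey series `₂F₁(b, 1 - b; c; 1/2)` -/
noncomputable def schloT (b c : ℂ) : ℕ → ℂ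
  | 0 => 1
  | n + 1 => schloT b c n * (((b + n) * (1 - b + n)) / (2 * (c + n) * (n + 1)))

open Filter Topology in
theorem schloT_summable (b c : ℂ) : Summable (fun n => ‖schloT b c n‖) := by
  have h := (schlo_ratio b c).norm
  have h2 : ∀ᶠ n : ℕ in atTop, ‖((b + n) * (1 - b + n)) / (2 * (c + n) * (n + 1))‖ ≤ 3/4 := by
    apply h.eventually_le_const
    norm_num
  refine summable_of_ratio_norm_eventually_le (r := 3/4) (by norm_num) ?_
  filter_upwards [h2] with n hn
  rw [norm_norm, norm_norm, schloT, norm_mul, mul_comm]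
  gcongr

theorem schloT_shift (b c : ℂ) (hc : ∀ n : ℕ, c + n ≠ 0) (n : ℕ) :
    schloT b (c + 2) n = schloT b c n * (c * (c + 1) / ((c + n) * (c + n + 1))) := by
  induction n with
  | zero =>
    have h0 := hc 0
    have h1 := hc 1
    push_cast at *
    rw [add_zero] at *
    simp only [schloT]
    field_simp
  | succ n ih =>
    have h0 := hc n
    have h1 := hc (n + 1)
    have h2 := hc (n + 2)
    have h3 : (n : ℂ) + 1 ≠ 0 := by exact_mod_cast n.succ_ne_zero
    push_cast at *
    rw [schloT, schloT, ih]
    rw [← add_assoc] at h1 h2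
    have e : c + 2 + n = c + n + 2 := by ring
    have e1 : c + (n + 1) = c + n + 1 := by ring
    have e2 : c + n + 1 + 1 = c + n + 2 := by ring
    rw [e, e1, e2]
    field_simp

theorem schloT_tele (b c : ℂ) (hc : ∀ n : ℕ, c + n ≠ 0) (N : ℕ) :
    ∑ n ∈ Finset.range N, (schloT b c n - (c + b) * (c + 1 - b) / (c * (c + 1)) * schloT b (c + 2) n)
      = -2 * N / (c + N) * schloT b c N := by
  induction N with
  | zero => simp
  | succ n ih =>
    have h00 := hc 0
    have h01 := hc 1
    have h0 := hc n
    have h1 := hc (n + 1)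
    have h3 : (n : ℂ) + 1 ≠ 0 := by exact_mod_cast n.succ_ne_zero
    push_cast at *
    rw [Finset.sum_range_succ, ih, schloT_shift b c hc, schloT]
    rw [← add_assoc] at h1
    rw [add_zero] at h00
    have e1 : c + (n + 1) = c + n + 1 := by ring
    rw [e1]
    field_simp
    ring

open Filter Topology in
theorem schlo_step (b c : ℂ) (hc : ∀ n : ℕ, c + n ≠ 0) :
    ∑' n, schloT b c n = (c + b) * (c + 1 - b) / (c * (c + 1)) * ∑' n, schloT b (c + 2) n := by
  have s1 : Summable (schloT b c) := (schloT_summable b c).of_norm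
  have s2 : Summable (schloT b (c + 2)) := (schloT_summable b (c + 2)).of_norm
  have h := ((s1.hasSum.sub (s2.hasSum.mul_left ((c + b) * (c + 1 - b) / (c * (c + 1)))))).tendsto_sum_nat
  have hz : Tendsto (fun N : ℕ => -2 * N / (c + N) * schloT b c N) atTop (𝓝 0) := by
    have h1 := tendsto_add_mul_div_add_mul_atTop_nhds (𝕜 := ℂ) 0 c (-2) one_ne_zero
    have := h1.mul s1.tendsto_atTop_zero
    simpa using this
  have := tendsto_nhds_unique (h.congr (schloT_tele b c hc)) hz
  exact sub_eq_zero.mp this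

theorem schlo_iter (b c : ℂ) (hc : ∀ n : ℕ, c + n ≠ 0) (N : ℕ) :
    ∑' n, schloT b c n = (∏ k ∈ Finset.range N, ((c + b) / 2 + k) * ((c + 1 - b) / 2 + k) /
      ((c / 2 + k) * ((c + 1) / 2 + k))) * ∑' n, schloT b (c + 2 * N) n := by
  induction N with
  | zero => simp
  | succ N ih =>
    rw [ih, Finset.prod_range_succ, schlo_step b (c + 2 * N), mul_assoc]
    · congr 1
      have e : c + 2 * (N : ℂ) + 2 = c + 2 * ((N + 1 : ℕ) : ℂ) := by push_cast; ring
      rw [e]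
      congr 1
      have h0 : c / 2 + N = (c + 2 * N) / 2 := by ring
      have h1 : (c + 1) / 2 + N = (c + 2 * N + 1) / 2 := by ring
      have h2 : (c + b) / 2 + N = (c + 2 * N + b) / 2 := by ring
      have h3 : (c + 1 - b) / 2 + N = (c + 2 * N + 1 - b) / 2 := by ring
      rw [h0, h1, h2, h3, div_mul_div_comm, div_mul_div_comm, div_div_div_cancel_right₀ (by norm_num)]
    · intro n
      have := hc (2 * N + n)
      push_cast at this
      rwa [← add_assoc] at this

open Filter Topology in
theorem schloT_bound (b c : ℂ) (hc : 1 ≤ c.re) (n : ℕ) : ‖schloT b c n‖ ≤ ‖schloT b 1 n‖ := by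
  induction n with
  | zero => simp [schloT]
  | succ n ih =>
    have h : ‖(1 : ℂ) + n‖ ≤ ‖c + n‖ := by
      have h1 : ‖(1 : ℂ) + n‖ = 1 + n := by
        have : (1 : ℂ) + n = ((1 + n : ℕ) : ℂ) := by push_cast; ring
        rw [this, Complex.norm_natCast]; push_cast; ring
      rw [h1]
      refine le_trans ?_ (Complex.re_le_norm _)
      simp [hc]
    have h0 : 0 < ‖(1 : ℂ) + n‖ := by
      rw [norm_pos_iff, add_comm]; exact_mod_cast n.succ_ne_zero
    have h3 : 0 < ‖(n : ℂ) + 1‖ := by rwa [add_comm]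
    rw [schloT, schloT]
    simp only [norm_mul, norm_div]
    gcongr
    exact mul_pos (mul_pos (by norm_num) h0) h3

open Filter Topology in
theorem schlo_lim (b c : ℂ) : Tendsto (fun N : ℕ => ∑' n, schloT b (c + 2 * N) n) atTop (𝓝 1) := by
  have hp : ∀ n : ℕ, Tendsto (fun N : ℕ => schloT b (c + 2 * N) n) atTop (𝓝 (if n = 0 then 1 else 0)) := by
    intro n
    induction n with
    | zero => simp [schloT]
    | succ n ih =>
      have h1 := tendsto_add_mul_div_add_mul_atTop_nhds (𝕜 := ℂ) ((b + n) * (1 - b + n) / (2 * (n + 1))) (c + n) 0 two_ne_zero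
      have := ih.mul h1
      simp only [zero_div, mul_zero, zero_mul, add_zero] at this
      simp only [Nat.succ_ne_zero, if_false]
      refine this.congr (fun N => ?_)
      rw [schloT]
      have e : c + n + 2 * (N : ℂ) = c + 2 * N + n := by ring
      rw [e, div_div]
      congr 2
      ring
  have := tendsto_tsum_of_dominated_convergence (schloT_summable b 1) hp (by
    obtain ⟨M, hM⟩ := exists_nat_ge (1 - c.re)
    filter_upwards [eventually_ge_atTop M] with N hN n
    apply schloT_bound
    have : (M : ℝ) ≤ N := by exact_mod_cast hN
    have h0 : (0 : ℝ) ≤ M := by positivity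
    simp
    linarith)
  simpa using this

open Filter Topology in
theorem schlo_bailey (b c : ℂ) (hc : ∀ n : ℕ, c + n ≠ 0)
    (hu : ∀ n : ℕ, (c + b) / 2 + n ≠ 0) (hv : ∀ n : ℕ, (c + 1 - b) / 2 + n ≠ 0) :
    ∑' n, schloT b c n = Complex.Gamma (c / 2) * Complex.Gamma ((c + 1) / 2) /
      (Complex.Gamma ((c + b) / 2) * Complex.Gamma ((c + 1 - b) / 2)) := by
  have hgu : Complex.Gamma ((c + b) / 2) ≠ 0 :=
    Complex.Gamma_ne_zero (fun m h => hu m (by rw [h]; ring))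
  have hgv : Complex.Gamma ((c + 1 - b) / 2) ≠ 0 :=
    Complex.Gamma_ne_zero (fun m h => hv m (by rw [h]; ring))
  have hG := ((Complex.GammaSeq_tendsto_Gamma (c / 2)).mul (Complex.GammaSeq_tendsto_Gamma ((c + 1) / 2))).div
    ((Complex.GammaSeq_tendsto_Gamma ((c + b) / 2)).mul (Complex.GammaSeq_tendsto_Gamma ((c + 1 - b) / 2)))
    (mul_ne_zero hgu hgv)
  have hF := hG.mul ((schlo_lim b c).comp (tendsto_add_atTop_nat 1))
  rw [mul_one] at hF
  refine tendsto_nhds_unique (tendsto_const_nhds.congr' ?_) hF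
  filter_upwards [eventually_ge_atTop 1] with N hN
  rw [schlo_iter b c hc (N + 1)]
  simp only [Function.comp, Pi.div_apply]
  congr 1
  simp only [Complex.GammaSeq]
  have hN0 : (N : ℂ) ≠ 0 := by exact_mod_cast (by omega : N ≠ 0)
  have hf : (N.factorial : ℂ) ≠ 0 := by exact_mod_cast N.factorial_ne_zero
  have hpow : (N : ℂ) ^ (c / 2) * (N : ℂ) ^ ((c + 1) / 2) = (N : ℂ) ^ ((c + b) / 2) * (N : ℂ) ^ ((c + 1 - b) / 2) := by
    rw [← Complex.cpow_add _ _ hN0, ← Complex.cpow_add _ _ hN0]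
    congr 1; ring
  have hpn : (N : ℂ) ^ ((c + b) / 2) * (N : ℂ) ^ ((c + 1 - b) / 2) ≠ 0 := by
    rw [← Complex.cpow_add _ _ hN0]
    simp [Complex.cpow_eq_zero_iff, hN0]
  rw [Finset.prod_div_distrib, Finset.prod_mul_distrib, Finset.prod_mul_distrib,
    div_mul_div_comm, div_mul_div_comm, div_div_div_eq]
  have hq : ∀ x y f : ℂ, x * f * (y * f) = x * y * (f * f) := by intros; ring
  rw [hq, hq, hpow]
  generalize (N : ℂ) ^ ((c + b) / 2) * (N : ℂ) ^ ((c + 1 - b) / 2) = X at hpn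
  have hX : X * ((N.factorial : ℂ) * N.factorial) ≠ 0 := mul_ne_zero hpn (mul_ne_zero hf hf)
  generalize X * ((N.factorial : ℂ) * N.factorial) = Y at hX
  rw [mul_comm _ Y]
  exact (mul_div_mul_left _ _ hX).symm

theorem schlo_term (a b : ℂ) (ha : ∀ n : ℤ, a ≠ n) (n : ℕ) :
    Complex.Gamma (a - n) / (2 ^ n * (n.factorial : ℂ)) * (ascPochhammer ℂ (2 * n)).eval (b - n)
      = Complex.Gamma a * schloT b (1 - a) n := by
  induction n with
  | zero => simp [schloT]
  | succ n ih =>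
    have h1 : a - n - 1 ≠ 0 := by
      intro h
      apply ha (n + 1)
      push_cast
      linear_combination h
    have hG : Complex.Gamma (a - n) = (a - n - 1) * Complex.Gamma (a - n - 1) := by
      rw [← Complex.Gamma_add_one _ h1]; congr 1; ring
    have hP : (ascPochhammer ℂ (2 * (n + 1))).eval (b - n - 1)
        = (b - n - 1) * (ascPochhammer ℂ (2 * n)).eval (b - n) * (b + n) := by
      have : 2 * (n + 1) = (2 * n + 1) + 1 := by ring
      rw [this, ascPochhammer_succ_left, Polynomial.eval_mul, Polynomial.eval_comp,
        Polynomial.eval_X, Polynomial.eval_add, Polynomial.eval_X, Polynomial.eval_one,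
        ascPochhammer_succ_eval, sub_add_cancel]
      push_cast
      ring
    have h3 : (n : ℂ) + 1 ≠ 0 := by exact_mod_cast n.succ_ne_zero
    have hf : (n.factorial : ℂ) ≠ 0 := by exact_mod_cast n.factorial_ne_zero
    have h2 : 1 - a + n ≠ 0 := by
      intro h; apply h1; linear_combination -h
    rw [schloT, ← mul_assoc, ← ih, hG]
    push_cast [Nat.factorial_succ]
    rw [← sub_sub, ← sub_sub, hP, pow_succ]
    field_simp
    ring

theorem schlomilch_generalized (w z : ℂ)
    (hw : ∀ n : ℤ, w ≠ (n : ℂ)) (hz : ∀ n : ℤ, z ≠ (n : ℂ))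
    (hwz : ∀ n : ℤ, w + z - 1 / 2 ≠ (n : ℂ)) :
    HasSum
      (fun n : ℕ =>
        Complex.Gamma (w + z - n - 1 / 2) / (2 ^ n * (n.factorial : ℂ)) *
          (ascPochhammer ℂ (2 * n)).eval (w - z - n + 1 / 2))
      (1 / (Real.sqrt (2 * Real.pi) : ℂ) * (2 : ℂ) ^ (w + z) *
          Complex.Gamma w * Complex.Gamma z /
        (1 - Complex.cot (Real.pi * w) * Complex.cot (Real.pi * z))) := by
  have key : (fun n : ℕ =>
        Complex.Gamma (w + z - n - 1 / 2) / (2 ^ n * (n.factorial : ℂ)) *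
          (ascPochhammer ℂ (2 * n)).eval (w - z - n + 1 / 2)) =
      fun n => Complex.Gamma (w + z - 1 / 2) * schloT (w - z + 1 / 2) (1 - (w + z - 1 / 2)) n := by
    funext n
    rw [← schlo_term _ _ hwz]
    congr 3 <;> ring
  rw [key]
  have hs := ((schloT_summable (w - z + 1 / 2) (1 - (w + z - 1 / 2))).of_norm).hasSum.mul_left
    (Complex.Gamma (w + z - 1 / 2))
  refine (congrArg (HasSum _) ?_).mpr hs
  have eu : (1 - (w + z - 1 / 2) + (w - z + 1 / 2)) / 2 = 1 - z := by ring
  have ev : (1 - (w + z - 1 / 2) + 1 - (w - z + 1 / 2)) / 2 = 1 - w := by ring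
  have hc : ∀ n : ℕ, (1 - (w + z - 1 / 2)) + n ≠ 0 := by
    intro n h
    apply hwz (n + 1)
    push_cast
    linear_combination -h
  have hsin : ∀ x : ℂ, (∀ n : ℤ, x ≠ n) → Complex.sin (Real.pi * x) ≠ 0 := by
    intro x hx h
    rw [Complex.sin_eq_zero_iff] at h
    obtain ⟨k, hk⟩ := h
    apply hx k
    have hpi : (Real.pi : ℂ) ≠ 0 := by exact_mod_cast Real.pi_ne_zero
    apply mul_left_cancel₀ hpi
    rw [hk]; ring
  rw [schlo_bailey _ _ hc, eu, ev]
  rotate_left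
  · intro n h
    rw [eu] at h
    apply hz (n + 1)
    push_cast
    linear_combination -h
  · intro n h
    rw [ev] at h
    apply hw (n + 1)
    push_cast
    linear_combination -h
  have hsw := hsin w hw
  have hsz := hsin z hz
  have hsa := hsin _ hwz
  have hpi : (Real.pi : ℂ) ≠ 0 := by exact_mod_cast Real.pi_ne_zero
  have dup := Complex.Gamma_mul_Gamma_add_half ((1 - (w + z - 1 / 2)) / 2)
  have e1 : (1 - (w + z - 1 / 2)) / 2 + 1 / 2 = (1 - (w + z - 1 / 2) + 1) / 2 := by ring
  have e2 : 2 * ((1 - (w + z - 1 / 2)) / 2) = 1 - (w + z - 1 / 2) := by ring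
  rw [e1, e2] at dup
  have ra := Complex.Gamma_mul_Gamma_one_sub (w + z - 1 / 2)
  have rw' := Complex.Gamma_mul_Gamma_one_sub w
  have rz := Complex.Gamma_mul_Gamma_one_sub z
  have hcos : Complex.sin (Real.pi * (w + z - 1 / 2)) =
      Complex.sin (Real.pi * w) * Complex.sin (Real.pi * z) - Complex.cos (Real.pi * w) * Complex.cos (Real.pi * z) := by
    have : (Real.pi : ℂ) * (w + z - 1 / 2) = (Real.pi * w + Real.pi * z) - Real.pi / 2 := by ring
    rw [this, Complex.sin_sub_pi_div_two, Complex.cos_add]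
    ring
  have hg1 : Complex.Gamma (1 - w) ≠ 0 := fun h => by
    rw [h, mul_zero] at rw'
    exact div_ne_zero hpi hsw rw'.symm
  have hg2 : Complex.Gamma (1 - z) ≠ 0 := fun h => by
    rw [h, mul_zero] at rz
    exact div_ne_zero hpi hsz rz.symm
  have hden : (1 - Complex.cot (Real.pi * w) * Complex.cot (Real.pi * z)) =
      Complex.sin (Real.pi * (w + z - 1 / 2)) / (Complex.sin (Real.pi * w) * Complex.sin (Real.pi * z)) := by
    rw [hcos, Complex.cot, Complex.cot]
    field_simp
  have hsq : (Real.sqrt (2 * Real.pi) : ℂ) = (Real.sqrt 2 : ℂ) * (Real.sqrt Real.pi : ℂ) := by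
    rw [Real.sqrt_mul (by norm_num)]; push_cast; rfl
  have hs2 : (Real.sqrt 2 : ℂ) ≠ 0 := by
    exact_mod_cast (Real.sqrt_pos.mpr (by norm_num : (0:ℝ) < 2)).ne'
  have hsp : (Real.sqrt Real.pi : ℂ) ≠ 0 := by
    exact_mod_cast (Real.sqrt_pos.mpr Real.pi_pos).ne'
  have hsp2 : (Real.sqrt Real.pi : ℂ) * (Real.sqrt Real.pi : ℂ) = Real.pi := by
    exact_mod_cast Real.mul_self_sqrt Real.pi_pos.le
  have hp2 : (2 : ℂ) ^ (1 - (1 - (w + z - 1 / 2))) = 2 ^ (w + z) / (Real.sqrt 2 : ℂ) := by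
    have : (1 - (1 - (w + z - 1 / 2))) = (w + z) - 1 / 2 := by ring
    rw [this, Complex.cpow_sub _ _ two_ne_zero, Real.sqrt_eq_rpow,
      Complex.ofReal_cpow (by norm_num)]
    push_cast
    rfl
  rw [dup, hden, hsq, hp2]
  have gw : Complex.Gamma w = Real.pi / Complex.sin (Real.pi * w) / Complex.Gamma (1 - w) := by
    rw [← rw']; field_simp
  have gz : Complex.Gamma z = Real.pi / Complex.sin (Real.pi * z) / Complex.Gamma (1 - z) := by
    rw [← rz]; field_simp
  rw [mul_div_assoc', ← mul_assoc, ← mul_assoc, ra, gw, gz]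
  clear hcos hden rw' rz ra gw gz
  generalize Complex.sin (Real.pi * w) = sw at *
  generalize Complex.sin (Real.pi * z) = sz at *
  generalize Complex.sin (Real.pi * (w + z - 1 / 2)) = sa at *
  field_simp
  rw [← hsp2]
  ring
end

section
/- For every non-negative integer m and every u ∈ ℂ, with k = 2m+1: cos(ku) = cos(u) · Σ_{n=0}^{m} ((−1)ⁿ/(2n)!) · sin^{2n}(u) · ∏_{j=1}^{n} (k² − (2j−1)²). -/
lemma aux_prod (m n : ℕ) (h : n ≤ m) :
    ∏ j ∈ Finset.Icc 1 n, ((2 * (m : ℂ) + 1) ^ 2 - (2 * (j : ℂ) - 1) ^ 2) =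
      4 ^ n * ((m + n).descFactorial (2 * n) : ℂ) := by
  induction n with
  | zero => simp
  | succ n ih =>
    rw [Finset.prod_Icc_succ_top (by omega), ih (by omega)]
    have e : (m + (n + 1)).descFactorial (2 * (n + 1)) =
        (m + n + 1) * ((m - n) * (m + n).descFactorial (2 * n)) := by
      rw [show m + (n + 1) = (m + n) + 1 by ring, show 2 * (n + 1) = (2 * n + 1) + 1 by ring,
        Nat.succ_descFactorial_succ, Nat.descFactorial_succ, show m + n - 2 * n = m - n by omega]
    rw [e]
    push_cast [Nat.cast_sub (show n ≤ m by omega)]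
    ring

/-- The polynomial in `y = -4 sin² u`. -/
noncomputable def auxS (y : ℂ) (m : ℕ) : ℂ :=
  ∑ n ∈ Finset.range (m + 1), y ^ n * ((m + n).choose (2 * n) : ℂ)

lemma auxS_ext (y : ℂ) (m M : ℕ) (h : m ≤ M) :
    auxS y m = ∑ n ∈ Finset.range (M + 1), y ^ n * ((m + n).choose (2 * n) : ℂ) := by
  unfold auxS
  apply Finset.sum_subset
  · intro x; simp only [Finset.mem_range]; omega
  · intro x _ hx
    simp only [Finset.mem_range] at hx
    rw [Nat.choose_eq_zero_of_lt (by omega)]; simp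

lemma auxS_rec (y : ℂ) (m : ℕ) : auxS y (m + 2) = (2 + y) * auxS y (m + 1) - auxS y m := by
  have key : auxS y (m + 2) + auxS y m - 2 * auxS y (m + 1) = y * auxS y (m + 1) := by
    rw [auxS_ext y (m + 2) (m + 2) le_rfl, auxS_ext y m (m + 2) (by omega)]
    conv_lhs => rw [auxS_ext y (m + 1) (m + 2) (by omega)]
    rw [Finset.mul_sum, ← Finset.sum_add_distrib, ← Finset.sum_sub_distrib,
      Finset.sum_range_succ']
    unfold auxS
    rw [Finset.mul_sum]
    simp only [mul_zero, Nat.choose_zero_right, pow_zero, Nat.cast_one]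
    norm_num
    rw [← Finset.sum_sub_distrib]
    apply Finset.sum_congr rfl
    intro n _
    have a1 : (m + 2 + (n + 1)).choose (2 * (n + 1)) =
        (m + n + 2).choose (2 * n + 1) + (m + n + 2).choose (2 * n + 2) := by
      rw [← Nat.choose_succ_succ']; congr 1; ring
    have a2 : (m + n + 2).choose (2 * n + 1) =
        (m + n + 1).choose (2 * n) + (m + n + 1).choose (2 * n + 1) := Nat.choose_succ_succ' _ _
    have a3 : (m + n + 2).choose (2 * n + 2) =
        (m + n + 1).choose (2 * n + 1) + (m + n + 1).choose (2 * n + 2) :=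
      Nat.choose_succ_succ' _ _
    rw [a1, a2, show m + 1 + (n + 1) = m + n + 2 by ring, show m + (n + 1) = m + n + 1 by ring,
      show m + 1 + n = m + n + 1 by ring, show 2 * (n + 1) = 2 * n + 2 by ring, a3]
    push_cast
    ring
  linear_combination key

lemma aux_cos (u : ℂ) (m : ℕ) :
    Complex.cos ((2 * (m : ℂ) + 1) * u) = Complex.cos u * auxS (-4 * Complex.sin u ^ 2) m := by
  induction m using Nat.twoStepInduction with
  | zero => simp [auxS]
  | one =>
    have h := Complex.cos_three_mul u
    have h2 := Complex.sin_sq_add_cos_sq u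
    simp only [auxS, Finset.sum_range_succ, Finset.sum_range_zero]
    norm_num
    rw [h]
    linear_combination (4 * Complex.cos u) * h2
  | more m h0 h1 =>
    rw [auxS_rec]
    have e1 : (2 * ((m + 2 : ℕ) : ℂ) + 1) * u = (2 * ((m + 1 : ℕ) : ℂ) + 1) * u + 2 * u := by
      push_cast; ring
    have e2 : (2 * (m : ℂ) + 1) * u = (2 * ((m + 1 : ℕ) : ℂ) + 1) * u - 2 * u := by
      push_cast; ring
    rw [e2, Complex.cos_sub] at h0
    rw [e1, Complex.cos_add]
    have h2 := Complex.sin_sq_add_cos_sq u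
    have h3 := Complex.cos_two_mul u
    linear_combination -h0 + (2 - 4 * Complex.sin u ^ 2) * h1 +
      2 * Complex.cos ((2 * ((m + 1 : ℕ) : ℂ) + 1) * u) * (h3 + 2 * h2)


/-- For every non-negative integer `m` and every `u ∈ ℂ`, with `k = 2m+1`:
`cos(ku) = cos(u) · Σ_{n=0}^{m} ((−1)ⁿ/(2n)!) · sin^{2n}(u) · ∏_{j=1}^{n} (k² − (2j−1)²)`. -/
theorem cos_odd_multiple (m : ℕ) (u : ℂ) :
    Complex.cos ((2 * (m : ℂ) + 1) * u) =
      Complex.cos u *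
        ∑ n ∈ Finset.range (m + 1),
          ((-1 : ℂ) ^ n / ((2 * n).factorial : ℂ)) * Complex.sin u ^ (2 * n) *
            ∏ j ∈ Finset.Icc 1 n, ((2 * (m : ℂ) + 1) ^ 2 - (2 * (j : ℂ) - 1) ^ 2) := by
  rw [aux_cos, auxS]
  congr 1
  apply Finset.sum_congr rfl
  intro n hn
  rw [aux_prod m n (by simp only [Finset.mem_range] at hn; omega),
    Nat.descFactorial_eq_factorial_mul_choose, mul_pow, pow_mul,
    show (-4 : ℂ) = (-1) * 4 by norm_num, mul_pow]
  have : ((2 * n).factorial : ℂ) ≠ 0 := by exact_mod_cast (2 * n).factorial_ne_zero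
  push_cast
  field_simp
end

section
/- For every non-negative integer m and every nonzero x ∈ ℂ: x^{2m} + x^{−(2m+2)} = (1 + x^{−2}) · Σ_{n=0}^{m} (1/(2n)!) · (x − 1/x)^{2n} · (m−n+1)_{2n}. -/
theorem S_rec (y : ℂ) (m : ℕ) :
    ∑ n ∈ Finset.range (m + 2), ((m + 1 + n).choose (2 * n) : ℂ) * y ^ n =
      ∑ n ∈ Finset.range (m + 1), ((m + n).choose (2 * n) : ℂ) * y ^ n +
      y * ∑ n ∈ Finset.range (m + 1), ((m + n + 1).choose (2 * n + 1) : ℂ) * y ^ n := by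
  have h : ∑ n ∈ Finset.range (m + 1), ((m + n).choose (2 * n) : ℂ) * y ^ n =
      ∑ n ∈ Finset.range (m + 2), ((m + n).choose (2 * n) : ℂ) * y ^ n := by
    rw [Finset.sum_range_succ _ (m + 1), Nat.choose_eq_zero_of_lt (by omega)]
    simp
  rw [h, Finset.sum_range_succ' _ (m + 1), Finset.sum_range_succ' _ (m + 1), Finset.mul_sum,
    add_right_comm (Finset.sum _ _), ← Finset.sum_add_distrib]
  congr 1
  · apply Finset.sum_congr rfl
    intro n _
    have e : (m + 1 + (n + 1)).choose (2 * (n + 1)) =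
      (m + n + 1).choose (2 * n + 1) + (m + (n + 1)).choose (2 * (n + 1)) := by
      rw [show m + 1 + (n + 1) = (m + n + 1) + 1 by ring,
        show 2 * (n + 1) = (2 * n + 1) + 1 by ring, Nat.choose_succ_succ]
      rfl
    rw [e]
    push_cast
    ring
  · simp

theorem T_rec (y : ℂ) (m : ℕ) :
    ∑ n ∈ Finset.range (m + 2), ((m + 1 + n + 1).choose (2 * n + 1) : ℂ) * y ^ n =
      ∑ n ∈ Finset.range (m + 1), ((m + n + 1).choose (2 * n + 1) : ℂ) * y ^ n +
      ∑ n ∈ Finset.range (m + 2), ((m + 1 + n).choose (2 * n) : ℂ) * y ^ n := by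
  have h : ∑ n ∈ Finset.range (m + 1), ((m + n + 1).choose (2 * n + 1) : ℂ) * y ^ n =
      ∑ n ∈ Finset.range (m + 2), ((m + n + 1).choose (2 * n + 1) : ℂ) * y ^ n := by
    rw [Finset.sum_range_succ _ (m + 1), Nat.choose_eq_zero_of_lt (by omega)]
    simp
  rw [h, ← Finset.sum_add_distrib]
  apply Finset.sum_congr rfl
  intro n _
  rw [Nat.choose_succ_succ, show m + n + 1 = m + 1 + n by ring]
  push_cast
  ring

theorem S_closed (x z : ℂ) (h : x * z = 1) (m : ℕ) :
    x ^ (2 * m) + z ^ (2 * m + 2) = (1 + z ^ 2) *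
      ∑ n ∈ Finset.range (m + 1), ((m + n).choose (2 * n) : ℂ) * ((x - z) ^ 2) ^ n := by
  induction m using Nat.twoStepInduction with
  | zero => simp
  | one =>
    simp [Finset.sum_range_succ]
    linear_combination (1 - x * z + 2 * z ^ 2) * h
  | more m h0 h1 =>
    have a := S_rec ((x - z) ^ 2) m
    have b := S_rec ((x - z) ^ 2) (m + 1)
    have c := T_rec ((x - z) ^ 2) m
    simp only [show m + 1 + 1 = m + 2 by rfl, show m + 1 + 2 = m + 2 + 1 by rfl] at a b c h1 ⊢
    rw [b, c]
    generalize ∑ n ∈ Finset.range (m + 1), ((m + n).choose (2 * n) : ℂ) * ((x - z) ^ 2) ^ n = s0 at *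
    generalize ∑ n ∈ Finset.range (m + 2), ((m + 1 + n).choose (2 * n) : ℂ) * ((x - z) ^ 2) ^ n = s1 at *
    generalize ∑ n ∈ Finset.range (m + 1), ((m + n + 1).choose (2 * n + 1) : ℂ) * ((x - z) ^ 2) ^ n = t at *
    have key : x ^ (2 * (m + 2)) + z ^ (2 * (m + 2) + 2) =
        (2 + (x - z) ^ 2) * (x ^ (2 * (m + 1)) + z ^ (2 * (m + 1) + 2)) -
          (x ^ (2 * m) + z ^ (2 * m + 2)) := by
      have e1 : x ^ (2 * (m + 1)) * z ^ 2 = x ^ (2 * m) := by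
        calc _ = x ^ (2 * m) * (x * z) ^ 2 := by ring
          _ = _ := by rw [h]; ring
      have e2 : z ^ (2 * (m + 1) + 2) * x ^ 2 = z ^ (2 * m + 2) := by
        calc _ = z ^ (2 * m + 2) * (x * z) ^ 2 := by ring
          _ = _ := by rw [h]; ring
      have e3 : 2 + (x - z) ^ 2 = x ^ 2 + z ^ 2 := by linear_combination -2 * h
      rw [e3]
      linear_combination -e1 - e2
    rw [key, h0, h1]
    linear_combination (1 + z ^ 2) * a

/-- For every non-negative integer `m` and every nonzero `x ∈ ℂ`:
`x^{2m} + x^{−(2m+2)} = (1 + x^{−2}) · Σ_{n=0}^{m} (1/(2n)!) · (x − 1/x)^{2n} · (m−n+1)_{2n}`. -/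
theorem laurent_identity (m : ℕ) (x : ℂ) (hx : x ≠ 0) :
    x ^ (2 * m) + x ^ (-(2 * (m : ℤ) + 2)) =
      (1 + x ^ (-2 : ℤ)) *
        ∑ n ∈ Finset.range (m + 1),
          (1 / ((2 * n).factorial : ℂ)) * (x - 1 / x) ^ (2 * n) *
            (ascPochhammer ℂ (2 * n)).eval ((m : ℂ) - n + 1) := by
  have h := S_closed x x⁻¹ (mul_inv_cancel₀ hx) m
  have e1 : x ^ (-(2 * (m : ℤ) + 2)) = x⁻¹ ^ (2 * m + 2) := by
    rw [zpow_neg, inv_pow, ← zpow_natCast]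
    push_cast
    rfl
  have e2 : x ^ (-2 : ℤ) = x⁻¹ ^ 2 := by
    rw [zpow_neg, inv_pow]
    rfl
  rw [e1, e2, h]
  congr 1
  apply Finset.sum_congr rfl
  intro n hn
  have hn' : n ≤ m := by
    have := Finset.mem_range.mp hn
    omega
  have e3 : (ascPochhammer ℂ (2 * n)).eval ((m : ℂ) - n + 1) =
      ((2 * n).factorial : ℂ) * ((m + n).choose (2 * n) : ℂ) := by
    have : ((m : ℂ) - n + 1) = ((m - n + 1 : ℕ) : ℂ) := by
      push_cast [Nat.cast_sub hn']
      ring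
    rw [this, ← ascPochhammer_eval_cast, ascPochhammer_nat_eq_ascFactorial,
      Nat.ascFactorial_eq_factorial_mul_choose, show m - n + 2 * n = m + n by omega]
    push_cast
    rfl
  have hf : ((2 * n).factorial : ℂ) ≠ 0 := by exact_mod_cast Nat.factorial_ne_zero _
  rw [e3, one_div x, pow_mul]
  field_simp
end
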